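/- arXiv:1309.0302 — 4 statements merged into one kernel-verified Lean document; each statement's English description precedes it below -/
import Mathlib

section
/- Let M be a real positive semidefinite matrix partitioned in block form M = [[A, B],[Bᵀ, C]], where A and C are square diagonal blocks. Then ‖M‖ ≤ ‖A‖ + ‖C‖, where ‖·‖ is the spectral norm. -/
open Matrix

noncomputable def specNorm {m n : Type*} [Fintype m] [Fintype n] [DecidableEq n]
    (A : Matrix m n ℝ) : ℝ :=
  ‖LinearMap.toContinuousLinearMap (Matrix.toEuclideanLin A)‖

open scoped Matrix.Norms.L2Operator in
/-- for a positive semidefinite block matrix `[[A,B],[Bᵀ,C]]`,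
the spectral norm is at most `‖A‖ + ‖C‖`. -/
theorem posSemidef_block_norm_le {a b : ℕ}
    (A : Matrix (Fin a) (Fin a) ℝ) (B : Matrix (Fin a) (Fin b) ℝ)
    (C : Matrix (Fin b) (Fin b) ℝ)
    (hM : (Matrix.fromBlocks A B Bᵀ C).PosSemidef) :
    specNorm (Matrix.fromBlocks A B Bᵀ C) ≤ specNorm A + specNorm C := by
  obtain ⟨X, hX⟩ : ∃ X : Matrix (Fin a ⊕ Fin b) (Fin a ⊕ Fin b) ℝ,
      Matrix.fromBlocks A B Bᵀ C = Xᴴ * X := by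
    open scoped MatrixOrder in
    exact CStarAlgebra.nonneg_iff_eq_star_mul_self.mp hM.nonneg
  change ‖Matrix.fromBlocks A B Bᵀ C‖ ≤ ‖A‖ + ‖C‖
  have hA : A = (X.toCols₁)ᴴ * X.toCols₁ := by
    ext i j
    exact congrFun (congrFun hX (Sum.inl i)) (Sum.inl j)
  have hC : C = (X.toCols₂)ᴴ * X.toCols₂ := by
    ext i j
    exact congrFun (congrFun hX (Sum.inr i)) (Sum.inr j)
  have hS : X * Xᴴ = X.toCols₁ * (X.toCols₁)ᴴ + X.toCols₂ * (X.toCols₂)ᴴ := by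
    ext i j
    simp [Matrix.mul_apply, Matrix.toCols₁, Matrix.toCols₂]
  have key : ∀ {m : ℕ} (Y : Matrix (Fin a ⊕ Fin b) (Fin m) ℝ), ‖Y * Yᴴ‖ = ‖Yᴴ * Y‖ := by
    intro m Y
    have h := Matrix.l2_opNorm_conjTranspose_mul_self Yᴴ
    rw [Matrix.conjTranspose_conjTranspose, Matrix.l2_opNorm_conjTranspose] at h
    rw [h, Matrix.l2_opNorm_conjTranspose_mul_self]
  have hn : ‖Xᴴ * X‖ = ‖X * Xᴴ‖ := by
    have h := Matrix.l2_opNorm_conjTranspose_mul_self Xᴴ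
    rw [Matrix.conjTranspose_conjTranspose, Matrix.l2_opNorm_conjTranspose] at h
    rw [h, Matrix.l2_opNorm_conjTranspose_mul_self]
  rw [hX, hn, hS, hA, hC, ← key, ← key]
  exact norm_add_le _ _
end

section
/- Fix real matrices S (of size m×k) and T (of size n×l), and let G be a k×l standard Gaussian random matrix. Then E‖S G Tᵀ‖ ≤ ‖S‖·‖T‖_F + ‖S‖_F·‖T‖, where ‖·‖ is the spectral norm and ‖·‖_F is the Frobenius norm. -/
open Matrix MeasureTheory ProbabilityTheory

noncomputable def frobNorm {m n : Type*} [Fintype m] [Fintype n] (A : Matrix m n ℝ) : ℝ :=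
  Real.sqrt (∑ i, ∑ j, (A i j) ^ 2)

instance matrixMeasurableSpace {m n : Type*} : MeasurableSpace (Matrix m n ℝ) :=
  MeasurableSpace.pi

/-- The distribution of a standard Gaussian random matrix: i.i.d. `N(0,1)` entries. -/
noncomputable def stdGaussianMatrix (m n : Type*) [Fintype m] [Fintype n] :
    Measure (Matrix m n ℝ) :=
  Measure.pi fun _ : m => Measure.pi fun _ : n => gaussianReal 0 1


lemma integrable_gauss_iff (f : ℝ → ℝ) :
    Integrable f (gaussianReal 0 1) ↔ Integrable (fun x => f x * gaussianPDFReal 0 1 x) := by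
  rw [gaussianReal_of_var_ne_zero _ one_ne_zero,
    integrable_withDensity_iff (measurable_gaussianPDF 0 1) (by simp [gaussianPDF])]
  simp [gaussianPDF, ENNReal.toReal_ofReal, gaussianPDFReal_nonneg]

lemma hasDerivAt_pdf (x : ℝ) :
    HasDerivAt (gaussianPDFReal 0 1) (-(x * gaussianPDFReal 0 1 x)) x := by
  rw [gaussianPDFReal_def]
  have h : HasDerivAt (fun x : ℝ => -(x - 0)^2 / (2 * ((1 : NNReal) : ℝ))) (-x) x := by
    have := (((hasDerivAt_id x).sub_const 0).pow 2).neg.div_const (2 * ((1 : NNReal) : ℝ))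
    refine this.congr_deriv ?_
    simp
    ring
  refine (h.exp.const_mul _).congr_deriv ?_
  ring

lemma stein1 (h h' : ℝ → ℝ) (hd : ∀ s, HasDerivAt h (h' s) s)
    (h1 : Integrable (fun s => s * h s) (gaussianReal 0 1))
    (h2 : Integrable h (gaussianReal 0 1)) (h3 : Integrable h' (gaussianReal 0 1)) :
    ∫ s, s * h s ∂(gaussianReal 0 1) = ∫ s, h' s ∂(gaussianReal 0 1) := by
  rw [integral_gaussianReal_eq_integral_smul one_ne_zero,
    integral_gaussianReal_eq_integral_smul one_ne_zero]
  rw [integrable_gauss_iff] at h1 h2 h3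
  have := integral_mul_deriv_eq_deriv_mul_of_integrable (u := h) (u' := h')
    (v := gaussianPDFReal 0 1) (v' := fun x => -(x * gaussianPDFReal 0 1 x))
    (fun x _ => hd x) (fun x _ => hasDerivAt_pdf x)
    (by convert h1.neg using 1; ext x; simp; ring) (by exact h3) (by exact h2)
  simp only [smul_eq_mul]
  have e : ∫ x, gaussianPDFReal 0 1 x * (x * h x) = - ∫ x, h x * -(x * gaussianPDFReal 0 1 x) := by
    rw [← integral_neg]; congr 1; ext x; ring
  rw [e, this, neg_neg]; congr 1; ext x; ring

set_option linter.unusedSectionVars false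

section
variable {κ : Type*} [Fintype κ] [DecidableEq κ]

/-- standard Gaussian measure on `κ → ℝ`. -/
noncomputable def gpi (κ : Type*) [Fintype κ] : Measure (κ → ℝ) :=
  Measure.pi fun _ : κ => gaussianReal 0 1

instance : IsProbabilityMeasure (gpi κ) := by unfold gpi; infer_instance

lemma update_mp (j : κ) : MeasurePreserving (fun p : (κ → ℝ) × ℝ => Function.update p.1 j p.2)
    ((gpi κ).prod (gaussianReal 0 1)) (gpi κ) := by
  have hm : Measurable (fun p : (κ → ℝ) × ℝ => Function.update p.1 j p.2) := by
    rw [measurable_pi_iff]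
    intro i
    by_cases h : i = j
    · subst h; simpa using measurable_snd
    · simp only [Function.update_of_ne h]
      fun_prop
  refine ⟨hm, ?_⟩
  symm
  unfold gpi
  apply Measure.pi_eq
  intro s hs
  rw [Measure.map_apply hm (MeasurableSet.univ_pi hs)]
  have : (fun p : (κ → ℝ) × ℝ => Function.update p.1 j p.2) ⁻¹' (Set.univ.pi s) =
      (Set.univ.pi (Function.update s j Set.univ)) ×ˢ (s j) := by
    ext p
    simp only [Set.mem_preimage, Set.mem_pi, Set.mem_univ, true_implies, Set.mem_prod]
    constructor
    · intro h
      refine ⟨fun i => ?_, by simpa using h j⟩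
      by_cases hi : i = j
      · subst hi; simp
      · simpa [hi] using h i
    · rintro ⟨h, h2⟩ i
      by_cases hi : i = j
      · subst hi; simpa using h2
      · simpa [hi] using h i
  rw [this, Measure.prod_prod, Measure.pi_pi, ← Finset.mul_prod_erase _ _ (Finset.mem_univ j),
    ← Finset.mul_prod_erase _ (fun i => gaussianReal 0 1 (s i)) (Finset.mem_univ j)]
  simp only [Function.update_self, measure_univ, one_mul]
  rw [mul_comm]
  congr 1
  apply Finset.prod_congr rfl
  intro i hi
  rw [Function.update_of_ne (Finset.ne_of_mem_erase hi)]

lemma stein (j : κ) (h h' : (κ → ℝ) → ℝ)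
    (hd : ∀ w s, HasDerivAt (fun s => h (Function.update w j s)) (h' (Function.update w j s)) s)
    (h1 : Integrable (fun w => w j * h w) (gpi κ))
    (h2 : Integrable h (gpi κ)) (h3 : Integrable h' (gpi κ)) :
    ∫ w, w j * h w ∂(gpi κ) = ∫ w, h' w ∂(gpi κ) := by
  have mp := update_mp (κ := κ) j
  have key : ∀ f : (κ → ℝ) → ℝ, Integrable f (gpi κ) →
      Integrable (fun p : (κ → ℝ) × ℝ => f (Function.update p.1 j p.2))
        ((gpi κ).prod (gaussianReal 0 1)) := fun f hf => mp.integrable_comp_of_integrable hf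
  have key2 : ∀ f : (κ → ℝ) → ℝ, Integrable f (gpi κ) →
      ∫ w, f w ∂(gpi κ) = ∫ w, ∫ s, f (Function.update w j s) ∂(gaussianReal 0 1) ∂(gpi κ) := by
    intro f hf
    rw [← integral_prod _ (key f hf)]
    conv_lhs => rw [← mp.map_eq]
    rw [integral_map mp.measurable.aemeasurable]
    rw [mp.map_eq]; exact hf.1
  rw [key2 _ h1, key2 _ h3]
  apply integral_congr_ae
  filter_upwards [(key _ h1).prod_right_ae, (key _ h2).prod_right_ae, (key _ h3).prod_right_ae]
    with w a1 a2 a3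
  simp only [Function.update_self] at a1 ⊢
  exact stein1 _ _ (hd w) a1 a2 a3

lemma memLp_coord (j : κ) (p : NNReal) : MemLp (fun w : κ → ℝ => w j) p (gpi κ) := by
  have := (measurePreserving_eval (fun _ : κ => gaussianReal 0 1) j)
  exact (memLp_id_gaussianReal (μ := 0) (v := 1) p).comp_measurePreserving this

lemma integrable_coord (j : κ) : Integrable (fun w : κ → ℝ => w j) (gpi κ) := by
  have := memLp_coord j 1
  exact memLp_one_iff_integrable.1 (by simpa using this)

lemma integrable_coord_mul (i j : κ) : Integrable (fun w : κ → ℝ => w i * w j) (gpi κ) := by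
  have h1 := memLp_coord i 2
  have h2 := memLp_coord j 2
  exact MemLp.integrable_mul (p := 2) (q := 2) (by simpa using h1) (by simpa using h2)

lemma integral_coord_mul (i j : κ) : ∫ w, w i * w j ∂(gpi κ) = if i = j then 1 else 0 := by
  rw [stein i (fun w => w j) (fun _ => if i = j then 1 else 0) _ (integrable_coord_mul i j)
    (integrable_coord j) (integrable_const _)]
  · simp
  · intro w s
    by_cases h : i = j
    · subst h; simpa using hasDerivAt_id' s
    · simpa [h, Function.update_of_ne (Ne.symm h)] using hasDerivAt_const s (w j)

end

section softmax
variable {I : Type*} [Fintype I] [Nonempty I]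

noncomputable def zsum (β : ℝ) (x : I → ℝ) : ℝ := ∑ i, Real.exp (β * x i)
noncomputable def sm (β : ℝ) (x : I → ℝ) (i : I) : ℝ := Real.exp (β * x i) / zsum β x
noncomputable def lse (β : ℝ) (x : I → ℝ) : ℝ := Real.log (zsum β x) / β

lemma zsum_pos (β : ℝ) (x : I → ℝ) : 0 < zsum β x :=
  Finset.sum_pos (fun _ _ => Real.exp_pos _) Finset.univ_nonempty

lemma sm_nonneg (β : ℝ) (x : I → ℝ) (i : I) : 0 ≤ sm β x i :=
  div_nonneg (Real.exp_pos _).le (zsum_pos β x).le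

lemma sm_sum (β : ℝ) (x : I → ℝ) : ∑ i, sm β x i = 1 := by
  unfold sm
  rw [← Finset.sum_div]
  exact div_self (zsum_pos β x).ne'

lemma sm_le_one (β : ℝ) (x : I → ℝ) (i : I) : sm β x i ≤ 1 := by
  rw [← sm_sum β x]
  exact Finset.single_le_sum (fun i _ => sm_nonneg β x i) (Finset.mem_univ i)

lemma le_lse {β : ℝ} (hβ : 0 < β) (x : I → ℝ) (i : I) : x i ≤ lse β x := by
  unfold lse
  rw [le_div_iff₀ hβ, Real.le_log_iff_exp_le (zsum_pos β x), mul_comm]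
  exact Finset.single_le_sum (f := fun i => Real.exp (β * x i))
    (fun i _ => (Real.exp_pos _).le) (Finset.mem_univ i)

lemma lse_le {β : ℝ} (hβ : 0 < β) (x : I → ℝ) (M : ℝ) (h : ∀ i, x i ≤ M) :
    lse β x ≤ M + Real.log (Fintype.card I) / β := by
  have hc : (0 : ℝ) < Fintype.card I := by exact_mod_cast Fintype.card_pos
  have h1 : zsum β x ≤ Fintype.card I * Real.exp (β * M) := by
    unfold zsum
    calc _ ≤ ∑ _i : I, Real.exp (β * M) := Finset.sum_le_sum fun i _ => by
            have := h i
            gcongr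
      _ = _ := by simp
  have h2 := Real.log_le_log (zsum_pos β x) h1
  rw [Real.log_mul hc.ne' (Real.exp_pos _).ne', Real.log_exp] at h2
  unfold lse
  rw [div_le_iff₀ hβ, add_mul, div_mul_cancel₀ _ hβ.ne']
  linarith

lemma abs_lse_le {β : ℝ} (hβ : 0 < β) (x : I → ℝ) :
    |lse β x| ≤ ∑ i, |x i| + Real.log (Fintype.card I) / β := by
  have hs : ∀ i, |x i| ≤ ∑ i, |x i| := fun i =>
    Finset.single_le_sum (f := fun i => |x i|) (fun i _ => abs_nonneg _) (Finset.mem_univ i)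
  have h0 : 0 ≤ Real.log (Fintype.card I) / β :=
    div_nonneg (Real.log_natCast_nonneg _) hβ.le
  obtain ⟨i⟩ := (inferInstance : Nonempty I)
  rw [abs_le]
  constructor
  · have := le_lse hβ x i
    have := hs i
    have := neg_abs_le (x i)
    linarith
  · exact lse_le hβ x _ fun i => (le_abs_self _).trans (hs i)

lemma hasDerivAt_zsum (β : ℝ) (x : ℝ → I → ℝ) (x' : I → ℝ) (s : ℝ)
    (hx : ∀ i, HasDerivAt (fun s => x s i) (x' i) s) :
    HasDerivAt (fun s => zsum β (x s)) (∑ i, Real.exp (β * x s i) * (β * x' i)) s := by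
  unfold zsum
  exact HasDerivAt.fun_sum fun i _ => ((hx i).const_mul β).exp

lemma hasDerivAt_lse {β : ℝ} (hβ : 0 < β) (x : ℝ → I → ℝ) (x' : I → ℝ) (s : ℝ)
    (hx : ∀ i, HasDerivAt (fun s => x s i) (x' i) s) :
    HasDerivAt (fun s => lse β (x s)) (∑ i, sm β (x s) i * x' i) s := by
  refine (((hasDerivAt_zsum β x x' s hx).log (zsum_pos β _).ne').div_const β).congr_deriv ?_
  have := (zsum_pos β (x s)).ne'
  rw [Finset.sum_div, Finset.sum_div]
  refine Finset.sum_congr rfl fun i _ => ?_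
  unfold sm
  field_simp

lemma hasDerivAt_sm (β : ℝ) (x : ℝ → I → ℝ) (x' : I → ℝ) (s : ℝ)
    (hx : ∀ i, HasDerivAt (fun s => x s i) (x' i) s) (i : I) :
    HasDerivAt (fun s => sm β (x s) i)
      (β * sm β (x s) i * (x' i - ∑ k, sm β (x s) k * x' k)) s := by
  have hz := (zsum_pos β (x s)).ne'
  refine ((((hx i).const_mul β).exp).div (hasDerivAt_zsum β x x' s hx) hz).congr_deriv ?_
  have e : ∑ i, Real.exp (β * x s i) * (β * x' i)
      = zsum β (x s) * β * ∑ k, sm β (x s) k * x' k := by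
    rw [Finset.mul_sum]
    refine Finset.sum_congr rfl fun i _ => ?_
    unfold sm
    field_simp
  rw [e]
  generalize ∑ k, sm β (x s) k * x' k = q
  unfold sm
  field_simp

lemma continuous_zsum (β : ℝ) : Continuous (zsum (I := I) β) := by
  unfold zsum; fun_prop

lemma continuous_lse (β : ℝ) : Continuous (lse (I := I) β) := by
  unfold lse
  exact ((continuous_zsum β).log fun x => (zsum_pos β x).ne').div_const _

lemma continuous_sm (β : ℝ) (i : I) : Continuous (fun x : I → ℝ => sm β x i) := by
  unfold sm
  exact Continuous.div (by fun_prop) (continuous_zsum β) fun x => (zsum_pos β x).ne'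

variable {κ : Type*} [Fintype κ] [DecidableEq κ]

/-- matrix action -/
def lin (A : I → κ → ℝ) (w : κ → ℝ) (i : I) : ℝ := ∑ j, A i j * w j

lemma continuous_lin (A : I → κ → ℝ) : Continuous (lin A) := by
  unfold lin; fun_prop

lemma integrable_lin (A : I → κ → ℝ) (i : I) : Integrable (fun w => lin A w i) (gpi κ) := by
  unfold lin
  exact integrable_finsetSum _ fun j _ => (integrable_coord j).const_mul _

lemma integrable_lse {β : ℝ} (hβ : 0 < β) (A : I → κ → ℝ) :
    Integrable (fun w => lse β (lin A w)) (gpi κ) := by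
  refine Integrable.mono' (g := fun w => ∑ i, |lin A w i| + Real.log (Fintype.card I) / β) ?_
    ((continuous_lse β).comp (continuous_lin A)).aestronglyMeasurable ?_
  · exact (integrable_finsetSum _ fun i _ => (integrable_lin A i).abs).add (integrable_const _)
  · exact Filter.Eventually.of_forall fun w => abs_lse_le hβ _

lemma integrable_sm (β : ℝ) (A : I → κ → ℝ) (i : I) :
    Integrable (fun w => sm β (lin A w) i) (gpi κ) := by
  refine Integrable.mono' (g := fun w => 1) (integrable_const _)
    ((continuous_sm β i).comp (continuous_lin A)).aestronglyMeasurable ?_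
  refine Filter.Eventually.of_forall fun w => ?_
  rw [Real.norm_eq_abs, abs_of_nonneg (sm_nonneg _ _ _)]
  exact sm_le_one _ _ _

lemma integrable_coord_sm (β : ℝ) (A : I → κ → ℝ) (i : I) (j : κ) :
    Integrable (fun w => w j * sm β (lin A w) i) (gpi κ) := by
  refine Integrable.mono' (g := fun w => |w j|) (integrable_coord j).abs
    ((continuous_apply j).mul
      ((continuous_sm β i).comp (continuous_lin A))).aestronglyMeasurable ?_
  refine Filter.Eventually.of_forall fun w => ?_
  rw [Real.norm_eq_abs, abs_mul, abs_of_nonneg (sm_nonneg _ _ _)]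
  exact mul_le_of_le_one_right (abs_nonneg _) (sm_le_one _ _ _)

lemma integrable_sm_sm (β : ℝ) (A : I → κ → ℝ) (i k : I) :
    Integrable (fun w => sm β (lin A w) i * sm β (lin A w) k) (gpi κ) := by
  refine Integrable.mono' (g := fun w => 1) (integrable_const _)
    (((continuous_sm β i).comp (continuous_lin A)).mul
      ((continuous_sm β k).comp (continuous_lin A))).aestronglyMeasurable ?_
  refine Filter.Eventually.of_forall fun w => ?_
  rw [Real.norm_eq_abs, abs_mul, abs_of_nonneg (sm_nonneg _ _ _), abs_of_nonneg (sm_nonneg _ _ _)]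
  exact mul_le_one₀ (sm_le_one _ _ _) (sm_nonneg _ _ _) (sm_le_one _ _ _)

lemma stein_sm (β : ℝ) (A : I → κ → ℝ) (i : I) (j : κ) :
    ∫ w, w j * sm β (lin A w) i ∂(gpi κ)
      = ∫ w, β * sm β (lin A w) i * (A i j - ∑ k, sm β (lin A w) k * A k j) ∂(gpi κ) := by
  refine stein j (fun w => sm β (lin A w) i)
    (fun w => β * sm β (lin A w) i * (A i j - ∑ k, sm β (lin A w) k * A k j)) ?_
    (integrable_coord_sm β A i j) (integrable_sm β A i) ?_
  · intro w s
    refine hasDerivAt_sm β (fun s => lin A (Function.update w j s)) (fun i => A i j) s ?_ i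
    intro i
    unfold lin
    have : ∀ j' ∈ Finset.univ, HasDerivAt (fun s => A i j' * Function.update w j s j')
        (if j' = j then A i j' else 0) s := by
      intro j' _
      by_cases h : j' = j
      · subst h; simpa using (hasDerivAt_id' s).const_mul (A i j')
      · simpa [h] using hasDerivAt_const s (A i j' * w j')
    simpa using HasDerivAt.fun_sum this
  · have : ∀ w, β * sm β (lin A w) i * (A i j - ∑ k, sm β (lin A w) k * A k j)
      = β * A i j * sm β (lin A w) i
        - ∑ k, (β * A k j) * (sm β (lin A w) i * sm β (lin A w) k) := by
      intro w
      rw [mul_sub, Finset.mul_sum]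
      congr 1
      · ring
      · exact Finset.sum_congr rfl fun k _ => by ring
    simp_rw [this]
    exact ((integrable_sm β A i).const_mul _).sub
      (integrable_finsetSum _ fun k _ => (integrable_sm_sm β A i k).const_mul _)

lemma sm_quad (p : I → ℝ) (hp : ∑ i, p i = 1) (C D : I → κ → ℝ) :
    2 * ∑ i, ∑ j, D i j * (p i * (C i j - ∑ k, p k * C k j))
      = ∑ i, ∑ k, p i * p k * ∑ j, (D i j - D k j) * (C i j - C k j) := by
  have e1 : ∀ i j, D i j * (p i * (C i j - ∑ k, p k * C k j))
      = ∑ k, p i * p k * (D i j * (C i j - C k j)) := by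
    intro i j
    have : C i j - ∑ k, p k * C k j = ∑ k, p k * (C i j - C k j) := by
      simp_rw [mul_sub, Finset.sum_sub_distrib, ← Finset.sum_mul, hp, one_mul]
    rw [this, Finset.mul_sum, Finset.mul_sum]
    exact Finset.sum_congr rfl fun k _ => by ring
  have e2 : ∑ i, ∑ j, D i j * (p i * (C i j - ∑ k, p k * C k j))
      = ∑ i, ∑ k, p i * p k * ∑ j, D i j * (C i j - C k j) := by
    refine Finset.sum_congr rfl fun i _ => ?_
    simp_rw [e1, Finset.mul_sum]
    exact Finset.sum_comm
  have e3 : ∑ i, ∑ k, p i * p k * ∑ j, D i j * (C i j - C k j)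
     = ∑ i, ∑ k, p i * p k * ∑ j, D k j * (C k j - C i j) := by
    rw [Finset.sum_comm]
    exact Finset.sum_congr rfl fun k _ => Finset.sum_congr rfl fun i _ => by ring
  rw [two_mul, e2]
  conv_lhs => rw [e3]
  conv_lhs => enter [1]; rw [← e3]
  rw [← Finset.sum_add_distrib]
  refine Finset.sum_congr rfl fun i _ => ?_
  rw [← Finset.sum_add_distrib]
  refine Finset.sum_congr rfl fun k _ => ?_
  rw [← mul_add, ← Finset.sum_add_distrib]
  congr 1
  exact Finset.sum_congr rfl fun j _ => by ring

lemma deriv_nonpos {β : ℝ} (hβ : 0 < β) (C D : I → κ → ℝ)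
    (h : ∀ i k, ∑ j, (D i j - D k j) * (C i j - C k j) ≤ 0) :
    ∫ w, ∑ i, sm β (lin C w) i * lin D w i ∂(gpi κ) ≤ 0 := by
  have e1 : ∀ w : κ → ℝ, ∑ i, sm β (lin C w) i * lin D w i
      = ∑ i, ∑ j, D i j * (w j * sm β (lin C w) i) := by
    intro w
    refine Finset.sum_congr rfl fun i _ => ?_
    unfold lin
    rw [Finset.mul_sum]
    exact Finset.sum_congr rfl fun k _ => by ring
  simp_rw [e1]
  rw [integral_finsetSum _ fun i _ => integrable_finsetSum _ fun j _ =>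
    (integrable_coord_sm β C i j).const_mul _]
  have hi : ∀ i j, Integrable
      (fun w => β * sm β (lin C w) i * (C i j - ∑ k, sm β (lin C w) k * C k j)) (gpi κ) := by
    intro i j
    have : ∀ w, β * sm β (lin C w) i * (C i j - ∑ k, sm β (lin C w) k * C k j)
      = β * C i j * sm β (lin C w) i
        - ∑ k, (β * C k j) * (sm β (lin C w) i * sm β (lin C w) k) := by
      intro w
      rw [mul_sub, Finset.mul_sum]
      congr 1
      · ring
      · exact Finset.sum_congr rfl fun k _ => by ring
    simp_rw [this]
    exact ((integrable_sm β C i).const_mul _).sub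
      (integrable_finsetSum _ fun k _ => (integrable_sm_sm β C i k).const_mul _)
  have e2 : ∀ i, ∫ w, ∑ j, D i j * (w j * sm β (lin C w) i) ∂(gpi κ)
     = ∫ w, ∑ j, D i j *
        (β * sm β (lin C w) i * (C i j - ∑ k, sm β (lin C w) k * C k j)) ∂(gpi κ) := by
    intro i
    rw [integral_finsetSum _ fun j _ => (integrable_coord_sm β C i j).const_mul _,
      integral_finsetSum _ fun j _ => (hi i j).const_mul _]
    refine Finset.sum_congr rfl fun j _ => ?_
    rw [integral_const_mul, integral_const_mul, stein_sm]
  simp_rw [e2]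
  rw [← integral_finsetSum _ fun i _ => integrable_finsetSum _ fun j _ => (hi i j).const_mul _]
  refine integral_nonpos fun w => ?_
  have q := sm_quad (sm β (lin C w)) (sm_sum _ _) C D
  have q2 : ∑ i, ∑ k, sm β (lin C w) i * sm β (lin C w) k *
      ∑ j, (D i j - D k j) * (C i j - C k j) ≤ 0 :=
    Finset.sum_nonpos fun i _ => Finset.sum_nonpos fun k _ =>
      mul_nonpos_of_nonneg_of_nonpos (mul_nonneg (sm_nonneg _ _ _) (sm_nonneg _ _ _)) (h i k)
  have q3 : ∑ i, ∑ j, D i j *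
        (β * sm β (lin C w) i * (C i j - ∑ k, sm β (lin C w) k * C k j))
      = β * ∑ i, ∑ j, D i j *
        (sm β (lin C w) i * (C i j - ∑ k, sm β (lin C w) k * C k j)) := by
    simp_rw [Finset.mul_sum]
    refine Finset.sum_congr rfl fun i _ => Finset.sum_congr rfl fun j _ => by ring
  simp only [Pi.zero_apply]
  rw [q3]
  exact mul_nonpos_of_nonneg_of_nonpos hβ.le (by linarith)

theorem sudakov_fernique {β : ℝ} (hβ : 0 < β) (A B : I → κ → ℝ)
    (horth : ∀ i k, ∑ j, A i j * B k j = 0)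
    (hinc : ∀ i k, ∑ j, (A i j - A k j) ^ 2 ≤ ∑ j, (B i j - B k j) ^ 2) :
    ∫ w, lse β (lin A w) ∂(gpi κ) ≤ ∫ w, lse β (lin B w) ∂(gpi κ) := by
  set C : ℝ → I → κ → ℝ := fun θ i j => Real.cos θ * B i j + Real.sin θ * A i j with hC
  set D : ℝ → I → κ → ℝ := fun θ i j => - Real.sin θ * B i j + Real.cos θ * A i j with hD
  have hlin : ∀ w i θ, HasDerivAt (fun θ => lin (C θ) w i) (lin (D θ) w i) θ := by
    intro w i θ
    unfold lin
    refine HasDerivAt.fun_sum fun j _ => ?_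
    exact (((Real.hasDerivAt_cos θ).mul_const _).add
      ((Real.hasDerivAt_sin θ).mul_const _)).mul_const _
  have hder : ∀ θ, HasDerivAt (fun θ => ∫ w, lse β (lin (C θ) w) ∂(gpi κ))
      (∫ w, ∑ i, sm β (lin (C θ) w) i * lin (D θ) w i ∂(gpi κ)) θ := by
    intro θ
    refine (hasDerivAt_integral_of_dominated_loc_of_deriv_le (s := Set.univ)
      (F := fun θ w => lse β (lin (C θ) w))
      (F' := fun θ w => ∑ i, sm β (lin (C θ) w) i * lin (D θ) w i)
      (bound := fun w => ∑ i, ∑ j, (|B i j| + |A i j|) * |w j|)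
      Filter.univ_mem ?_ (integrable_lse hβ _) ?_ ?_ ?_ ?_).2
    · exact Filter.Eventually.of_forall fun x =>
        ((continuous_lse β).comp (continuous_lin _)).aestronglyMeasurable
    · refine Continuous.aestronglyMeasurable ?_
      refine continuous_finsetSum _ fun i _ => ?_
      exact ((continuous_sm β i).comp (continuous_lin _)).mul
        ((continuous_apply i).comp (continuous_lin _))
    · refine Filter.Eventually.of_forall fun w x _ => ?_
      refine (norm_sum_le _ _).trans (Finset.sum_le_sum fun i _ => ?_)
      rw [norm_mul, Real.norm_eq_abs, abs_of_nonneg (sm_nonneg _ _ _)]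
      refine (mul_le_of_le_one_left (norm_nonneg _) (sm_le_one _ _ _)).trans ?_
      unfold lin
      refine (norm_sum_le _ _).trans (Finset.sum_le_sum fun j _ => ?_)
      rw [norm_mul, Real.norm_eq_abs, Real.norm_eq_abs]
      refine mul_le_mul_of_nonneg_right ?_ (abs_nonneg _)
      simp only [hD]
      refine (abs_add_le _ _).trans (add_le_add ?_ ?_)
      · rw [abs_mul, abs_neg]
        exact mul_le_of_le_one_left (abs_nonneg _) (Real.abs_sin_le_one _)
      · rw [abs_mul]
        exact mul_le_of_le_one_left (abs_nonneg _) (Real.abs_cos_le_one _)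
    · exact integrable_finsetSum _ fun i _ => integrable_finsetSum _ fun j _ =>
        (integrable_coord j).abs.const_mul _
    · exact Filter.Eventually.of_forall fun w x _ =>
        hasDerivAt_lse hβ (fun θ => lin (C θ) w) _ x fun i => hlin w i x
  have hanti : AntitoneOn (fun θ => ∫ w, lse β (lin (C θ) w) ∂(gpi κ))
      (Set.Icc 0 (Real.pi / 2)) := by
    apply antitoneOn_of_deriv_nonpos (convex_Icc _ _)
    · exact fun θ _ => (hder θ).continuousAt.continuousWithinAt
    · exact fun θ _ => (hder θ).differentiableAt.differentiableWithinAt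
    · intro θ hθ
      rw [interior_Icc] at hθ
      rw [(hder θ).deriv]
      apply deriv_nonpos hβ
      intro i k
      have hs : 0 ≤ Real.sin θ := Real.sin_nonneg_of_nonneg_of_le_pi hθ.1.le
        (by have := hθ.2; have := Real.pi_pos; linarith)
      have hc : 0 ≤ Real.cos θ := Real.cos_nonneg_of_neg_pi_div_two_le_of_le
        (by have := hθ.1; have := Real.pi_pos; linarith) hθ.2.le
      have horth' : ∑ j, (A i j - A k j) * (B i j - B k j) = 0 := by
        have : ∀ j, (A i j - A k j) * (B i j - B k j)
          = A i j * B i j - A i j * B k j - A k j * B i j + A k j * B k j := fun j => by ring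
        simp_rw [this, Finset.sum_add_distrib, Finset.sum_sub_distrib, horth]
        simp
      have e : ∑ j, (D θ i j - D θ k j) * (C θ i j - C θ k j)
        = Real.sin θ * Real.cos θ *
            (∑ j, (A i j - A k j) ^ 2 - ∑ j, (B i j - B k j) ^ 2)
          + (Real.cos θ ^ 2 - Real.sin θ ^ 2) * ∑ j, (A i j - A k j) * (B i j - B k j) := by
        rw [← Finset.sum_sub_distrib, Finset.mul_sum, Finset.mul_sum, ← Finset.sum_add_distrib]
        refine Finset.sum_congr rfl fun j _ => ?_
        simp only [hC, hD]
        ring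
      rw [e, horth', mul_zero, add_zero]
      exact mul_nonpos_of_nonneg_of_nonpos (mul_nonneg hs hc) (by linarith [hinc i k])
  have := hanti (a := 0) (b := Real.pi / 2) ⟨le_rfl, by positivity⟩ ⟨by positivity, le_rfl⟩
    (by positivity)
  simpa [hC] using this

end softmax

section final

lemma exists_net {E : Type*} [NormedAddCommGroup E] [NormedSpace ℝ E] [FiniteDimensional ℝ E]
    {ε : ℝ} (hε : 0 < ε) : ∃ N : Finset E, 0 ∈ N ∧ (∀ y ∈ N, ‖y‖ ≤ 1) ∧
      ∀ x : E, ‖x‖ ≤ 1 → ∃ y ∈ N, ‖x - y‖ ≤ ε := by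
  classical
  have : ProperSpace E := FiniteDimensional.proper ℝ E
  obtain ⟨t, ht, htf, hc⟩ := (isCompact_closedBall (0 : E) 1).finite_cover_balls hε
  refine ⟨insert 0 htf.toFinset, by simp, ?_, ?_⟩
  · intro y hy
    rw [Finset.mem_insert] at hy
    rcases hy with rfl | hy
    · simp
    · simpa using ht (htf.mem_toFinset.1 hy)
  · intro x hx
    have : x ∈ Metric.closedBall (0 : E) 1 := by simpa using hx
    have := hc this
    simp only [Set.mem_iUnion] at this
    obtain ⟨y, hy, hxy⟩ := this
    refine ⟨y, by simp [hy], ?_⟩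
    rw [← dist_eq_norm]
    exact (Metric.mem_ball.1 hxy).le

lemma norm_le_of_net {E F : Type*} [NormedAddCommGroup E] [InnerProductSpace ℝ E]
    [NormedAddCommGroup F] [InnerProductSpace ℝ F] (L : E →L[ℝ] F) {ε c : ℝ} (hε : 0 < ε)
    (N : Finset E) (N' : Finset F) (h0 : 0 ∈ N) (h0' : 0 ∈ N')
    (hN' : ∀ y ∈ N', ‖y‖ ≤ 1)
    (hn : ∀ x : E, ‖x‖ ≤ 1 → ∃ y ∈ N, ‖x - y‖ ≤ ε)
    (hn' : ∀ x : F, ‖x‖ ≤ 1 → ∃ y ∈ N', ‖x - y‖ ≤ ε)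
    (hc : ∀ u ∈ N', ∀ v ∈ N, inner ℝ u (L v) ≤ c) :
    (1 - 2 * ε) * ‖L‖ ≤ c := by
  have c0 : 0 ≤ c := by simpa using hc 0 h0' 0 h0
  have : ‖L‖ ≤ c + 2 * ε * ‖L‖ := by
    refine ContinuousLinearMap.opNorm_le_of_unit_norm (by positivity) fun x hx => ?_
    by_cases hy : L x = 0
    · rw [hy, norm_zero]; positivity
    have hy' : ‖L x‖ ≠ 0 := by simpa using hy
    obtain ⟨v, hv, hxv⟩ := hn x hx.le
    set y : F := ‖L x‖⁻¹ • L x with hyd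
    have hy1 : ‖y‖ = 1 := by rw [hyd, norm_smul, norm_inv, norm_norm, inv_mul_cancel₀ hy']
    obtain ⟨u, hu, hyu⟩ := hn' y hy1.le
    have e : ‖L x‖ = inner ℝ u (L v) + inner ℝ u (L (x - v)) + inner ℝ (y - u) (L x) := by
      have : inner ℝ y (L x) = ‖L x‖ := by
        rw [hyd, real_inner_smul_left, real_inner_self_eq_norm_sq]
        field_simp
      rw [map_sub, inner_sub_right, inner_sub_left, this]
      ring
    have b1 := hc u hu v hv
    have b2 : inner ℝ u (L (x - v)) ≤ ‖L‖ * ε :=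
      calc _ ≤ ‖u‖ * ‖L (x - v)‖ := real_inner_le_norm _ _
        _ ≤ 1 * (‖L‖ * ε) := by
          refine mul_le_mul (hN' u hu) ?_ (norm_nonneg _) zero_le_one
          exact (L.le_opNorm _).trans (by gcongr)
        _ = _ := one_mul _
    have b3 : inner ℝ (y - u) (L x) ≤ ε * ‖L‖ :=
      calc _ ≤ ‖y - u‖ * ‖L x‖ := real_inner_le_norm _ _
        _ ≤ ε * ‖L‖ := by
          refine mul_le_mul hyu ?_ (norm_nonneg _) hε.le
          simpa [hx] using L.le_opNorm x
    rw [e]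
    linarith
  linarith

/-- Euclidean norm on functions. -/
noncomputable def en {ι : Type*} [Fintype ι] (a : ι → ℝ) : ℝ := Real.sqrt (∑ i, a i ^ 2)

lemma en_nonneg {ι : Type*} [Fintype ι] (a : ι → ℝ) : 0 ≤ en a := Real.sqrt_nonneg _

lemma en_sq {ι : Type*} [Fintype ι] (a : ι → ℝ) : en a ^ 2 = ∑ i, a i ^ 2 :=
  Real.sq_sqrt (Finset.sum_nonneg fun _ _ => sq_nonneg _)

lemma en_eq_norm {ι : Type*} [Fintype ι] (a : EuclideanSpace ℝ ι) : en (fun i => a i) = ‖a‖ := by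
  rw [EuclideanSpace.norm_eq]
  simp [en]

lemma cs {ι : Type*} [Fintype ι] (a b : ι → ℝ) : ∑ i, a i * b i ≤ en a * en b :=
  Real.sum_mul_le_sqrt_mul_sqrt _ _ _

lemma en_mulVec_le {m n : ℕ} (S : Matrix (Fin m) (Fin n) ℝ) (x : Fin n → ℝ) :
    en (fun i => ∑ j, S i j * x j) ≤ specNorm S * en x := by
  have h := (LinearMap.toContinuousLinearMap (Matrix.toEuclideanLin S)).le_opNorm (WithLp.toLp 2 x)
  rw [← en_eq_norm, ← en_eq_norm] at h
  simpa [specNorm, Matrix.toLpLin_apply, Matrix.mulVec, dotProduct] using h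

lemma specNorm_nonneg {m n : ℕ} (S : Matrix (Fin m) (Fin n) ℝ) : 0 ≤ specNorm S := norm_nonneg _

/-- transpose action -/
def tr {m n : ℕ} (S : Matrix (Fin m) (Fin n) ℝ) (u : Fin m → ℝ) (p : Fin n) : ℝ :=
  ∑ i, S i p * u i

lemma en_tr_le {m n : ℕ} (S : Matrix (Fin m) (Fin n) ℝ) (u : Fin m → ℝ) (hu : en u ≤ 1) :
    en (tr S u) ≤ specNorm S := by
  have h1 : en (tr S u) ^ 2 = ∑ i, u i * (∑ j, S i j * tr S u j) := by
    rw [en_sq]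
    simp_rw [Finset.mul_sum]
    rw [Finset.sum_comm]
    refine Finset.sum_congr rfl fun p _ => ?_
    rw [sq]
    conv_lhs => enter [1]; unfold tr
    rw [Finset.sum_mul]
    exact Finset.sum_congr rfl fun i _ => by ring
  have h2 := cs u (fun i => ∑ j, S i j * tr S u j)
  have h3 := en_mulVec_le S (tr S u)
  have h4 : en (tr S u) ^ 2 ≤ specNorm S * en (tr S u) := by
    rw [h1]
    refine h2.trans ?_
    refine (mul_le_of_le_one_left (en_nonneg _) hu).trans h3
  by_contra! hlt
  have hp : 0 < en (tr S u) := (specNorm_nonneg S).trans_lt hlt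
  nlinarith

lemma tr_pair_le {m n : ℕ} (S : Matrix (Fin m) (Fin n) ℝ) (u : Fin m → ℝ) (hu : en u ≤ 1)
    (g : Fin n → ℝ) : ∑ p, tr S u p * g p ≤ en (fun i => ∑ j, S i j * g j) := by
  have e : ∑ p, tr S u p * g p = ∑ i, u i * ∑ j, S i j * g j := by
    unfold tr
    simp_rw [Finset.mul_sum, Finset.sum_mul]
    rw [Finset.sum_comm]
    exact Finset.sum_congr rfl fun p _ => Finset.sum_congr rfl fun i _ => by ring
  rw [e]
  exact (cs _ _).trans (mul_le_of_le_one_left (en_nonneg _) hu)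

variable {κ : Type*} [Fintype κ] [DecidableEq κ]

lemma continuous_en_lin {m n : ℕ} (T : Matrix (Fin m) (Fin n) ℝ) (e : Fin n → κ) :
    Continuous (fun w : κ → ℝ => en (fun i => ∑ j, T i j * w (e j))) := by
  unfold en
  fun_prop

lemma sq_expand {m n : ℕ} (T : Matrix (Fin m) (Fin n) ℝ) (e : Fin n → κ) (w : κ → ℝ) :
    en (fun i => ∑ j, T i j * w (e j)) ^ 2
      = ∑ i, ∑ j, ∑ j', T i j * T i j' * (w (e j) * w (e j')) := by
  rw [en_sq]
  refine Finset.sum_congr rfl fun i _ => ?_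
  rw [sq, Finset.sum_mul_sum]
  exact Finset.sum_congr rfl fun p _ => Finset.sum_congr rfl fun i _ => by ring

lemma integrable_en_sq {m n : ℕ} (T : Matrix (Fin m) (Fin n) ℝ) (e : Fin n → κ) :
    Integrable (fun w : κ → ℝ => en (fun i => ∑ j, T i j * w (e j)) ^ 2) (gpi κ) := by
  simp_rw [sq_expand]
  exact integrable_finsetSum _ fun i _ => integrable_finsetSum _ fun j _ =>
    integrable_finsetSum _ fun j' _ => (integrable_coord_mul _ _).const_mul _

lemma integrable_en {m n : ℕ} (T : Matrix (Fin m) (Fin n) ℝ) (e : Fin n → κ) :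
    Integrable (fun w : κ → ℝ => en (fun i => ∑ j, T i j * w (e j))) (gpi κ) := by
  refine Integrable.mono' (g := fun w => 1 + en (fun i => ∑ j, T i j * w (e j)) ^ 2)
    ((integrable_const _).add (integrable_en_sq T e))
    (continuous_en_lin T e).aestronglyMeasurable ?_
  refine Filter.Eventually.of_forall fun w => ?_
  rw [Real.norm_eq_abs, abs_of_nonneg (en_nonneg _)]
  nlinarith [sq_nonneg (en (fun i => ∑ j, T i j * w (e j)) - 1),
    en_nonneg (fun i => ∑ j, T i j * w (e j))]

lemma integral_en_le {m n : ℕ} (T : Matrix (Fin m) (Fin n) ℝ) (e : Fin n → κ)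
    (he : Function.Injective e) :
    ∫ w, en (fun i => ∑ j, T i j * w (e j)) ∂(gpi κ) ≤ frobNorm T := by
  have hsq : ∫ w, en (fun i => ∑ j, T i j * w (e j)) ^ 2 ∂(gpi κ) = ∑ i, ∑ j, T i j ^ 2 := by
    simp_rw [sq_expand]
    rw [integral_finsetSum _ fun i _ => integrable_finsetSum _ fun j _ =>
      integrable_finsetSum _ fun j' _ => (integrable_coord_mul _ _).const_mul _]
    refine Finset.sum_congr rfl fun i _ => ?_
    rw [integral_finsetSum _ fun j _ =>
      integrable_finsetSum _ fun j' _ => (integrable_coord_mul _ _).const_mul _]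
    refine Finset.sum_congr rfl fun j _ => ?_
    rw [integral_finsetSum _ fun j' _ => (integrable_coord_mul _ _).const_mul _]
    simp_rw [integral_const_mul, integral_coord_mul, he.eq_iff]
    simp [sq]
  set M := ∫ w, en (fun i => ∑ j, T i j * w (e j)) ∂(gpi κ) with hM
  have h1 : ∫ w, 2 * M * en (fun i => ∑ j, T i j * w (e j)) ∂(gpi κ)
      ≤ ∫ w, (en (fun i => ∑ j, T i j * w (e j)) ^ 2 + M ^ 2) ∂(gpi κ) := by
    refine integral_mono ((integrable_en T e).const_mul _)
      ((integrable_en_sq T e).add (integrable_const _)) fun w => ?_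
    simp only
    nlinarith [sq_nonneg (en (fun i => ∑ j, T i j * w (e j)) - M)]
  rw [integral_const_mul, integral_add (integrable_en_sq T e) (integrable_const _), hsq, ← hM] at h1
  simp only [integral_const, probReal_univ, smul_eq_mul, one_mul] at h1
  unfold frobNorm
  apply Real.le_sqrt_of_sq_le
  nlinarith

abbrev KK (k l : ℕ) := (Fin k × Fin l) ⊕ (Fin l ⊕ Fin k)

def getG {k l : ℕ} (w : KK k l → ℝ) : Matrix (Fin k) (Fin l) ℝ := fun p q => w (Sum.inl (p, q))

lemma getG_mp (k l : ℕ) : MeasurePreserving (getG (k := k) (l := l)) (gpi (KK k l))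
    (stdGaussianMatrix (Fin k) (Fin l)) := by
  have h1 := measurePreserving_sumPiEquivProdPi
    (X := fun _ : KK k l => ℝ) (fun _ => gaussianReal 0 1)
  have h2 : MeasurePreserving (Prod.fst : ((Fin k × Fin l → ℝ) × (Fin l ⊕ Fin k → ℝ)) → _)
    ((Measure.pi fun _ => gaussianReal 0 1).prod (Measure.pi fun _ => gaussianReal 0 1))
    (Measure.pi fun _ => gaussianReal 0 1) := measurePreserving_fst
  have h3 : MeasurePreserving (MeasurableEquiv.curry (Fin k) (Fin l) ℝ)
      (Measure.pi fun _ => gaussianReal 0 1)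
      (Measure.pi fun _ => Measure.pi fun _ => gaussianReal 0 1) := by
    refine ⟨MeasurableEquiv.measurable _, ?_⟩
    have := Measure.infinitePi_map_curry (ι := Fin k) (κ := Fin l) (X := ℝ)
      (fun _ _ => gaussianReal 0 1)
    simpa only [Measure.infinitePi_eq_pi] using this
  exact h3.comp (h2.comp h1)

def cA {k l : ℕ} (a : Fin k → ℝ) (b : Fin l → ℝ) : KK k l → ℝ
  | Sum.inl (p, q) => a p * b q
  | Sum.inr _ => 0

noncomputable def cB {k l : ℕ} (a : Fin k → ℝ) (b : Fin l → ℝ) : KK k l → ℝ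
  | Sum.inl _ => 0
  | Sum.inr (Sum.inl q) => en a * b q
  | Sum.inr (Sum.inr p) => en b * a p

lemma cAB_orth {k l : ℕ} (a a' : Fin k → ℝ) (b b' : Fin l → ℝ) :
    ∑ j, cA a b j * cB a' b' j = 0 := by
  simp [cA, cB]

lemma sum_sub_sq {ι : Type*} [Fintype ι] (c c' : ℝ) (a a' : ι → ℝ) :
    ∑ i, (c * a i - c' * a' i) ^ 2
      = c ^ 2 * en a ^ 2 + c' ^ 2 * en a' ^ 2 - 2 * c * c' * ∑ i, a i * a' i := by
  rw [en_sq, en_sq, Finset.mul_sum, Finset.mul_sum, Finset.mul_sum, ← Finset.sum_add_distrib,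
    ← Finset.sum_sub_distrib]
  exact Finset.sum_congr rfl fun i _ => by ring

lemma cAB_inc {k l : ℕ} (a a' : Fin k → ℝ) (b b' : Fin l → ℝ) :
    ∑ j, (cA a b j - cA a' b' j) ^ 2 ≤ ∑ j, (cB a b j - cB a' b' j) ^ 2 := by
  simp only [Fintype.sum_sum_type, cA, cB, sub_self, Fintype.sum_prod_type, sum_sub_sq]
  have e : ∑ x, ((a x) ^ 2 * en b ^ 2 + (a' x) ^ 2 * en b' ^ 2
        - 2 * a x * a' x * ∑ i, b i * b' i)
      = en a ^ 2 * en b ^ 2 + en a' ^ 2 * en b' ^ 2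
        - 2 * (∑ i, a i * a' i) * ∑ i, b i * b' i := by
    rw [en_sq a, en_sq a', Finset.sum_sub_distrib, Finset.sum_add_distrib, ← Finset.sum_mul,
      ← Finset.sum_mul, ← Finset.sum_mul]
    simp_rw [mul_assoc, ← Finset.mul_sum]
    ring
  rw [e]
  have h1 := cs a a'
  have h2 := cs b b'
  have h3 := mul_nonneg (sub_nonneg.2 h1) (sub_nonneg.2 h2)
  simp
  nlinarith [sq_nonneg (en a * en b - en a' * en b')]

lemma main_eps {m k n l : ℕ} (S : Matrix (Fin m) (Fin k) ℝ) (T : Matrix (Fin n) (Fin l) ℝ)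
    {ε : ℝ} (hε : 0 < ε) (hε2 : ε < 1 / 2) : ∃ N : ℝ, ∀ β : ℝ, 0 < β →
    (1 - 2 * ε) * ∫ G, specNorm (S * G * Tᵀ) ∂(stdGaussianMatrix (Fin k) (Fin l)) ≤
      specNorm S * frobNorm T + frobNorm S * specNorm T + N / β := by
  obtain ⟨N, h0, hN, hn⟩ := exists_net (E := EuclideanSpace ℝ (Fin n)) hε
  obtain ⟨N', h0', hN', hn'⟩ := exists_net (E := EuclideanSpace ℝ (Fin m)) hε
  have : Nonempty N := ⟨⟨0, h0⟩⟩
  have : Nonempty N' := ⟨⟨0, h0'⟩⟩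
  refine ⟨Real.log (Fintype.card (N' × N)), fun β hβ => ?_⟩
  set a : N' × N → Fin k → ℝ := fun i => tr S (fun j => i.1.1 j) with ha
  set b : N' × N → Fin l → ℝ := fun i => tr T (fun j => i.2.1 j) with hb
  have hu : ∀ i : N' × N, en (fun j => i.1.1 j) ≤ 1 := fun i => by
    rw [en_eq_norm]; exact hN' _ i.1.2
  have hv : ∀ i : N' × N, en (fun j => i.2.1 j) ≤ 1 := fun i => by
    rw [en_eq_norm]; exact hN _ i.2.2
  set A : N' × N → KK k l → ℝ := fun i => cA (a i) (b i) with hA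
  set B : N' × N → KK k l → ℝ := fun i => cB (a i) (b i) with hB
  have sf := sudakov_fernique hβ A B (fun i k => cAB_orth _ _ _ _) (fun i k => cAB_inc _ _ _ _)
  have hX : ∀ w i, lin A w i = inner ℝ i.1.1
      ((LinearMap.toContinuousLinearMap (Matrix.toEuclideanLin (S * getG w * Tᵀ))) i.2.1) := by
    intro w i
    have e1 : lin A w i = ∑ p, ∑ q, a i p * b i q * w (Sum.inl (p, q)) := by
      simp [lin, hA, cA, Fintype.sum_prod_type]
    have e2 : inner ℝ i.1.1
      ((LinearMap.toContinuousLinearMap (Matrix.toEuclideanLin (S * getG w * Tᵀ))) i.2.1)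
      = (fun j => i.1.1 j) ⬝ᵥ ((S * getG w * Tᵀ) *ᵥ (fun j => i.2.1 j)) := by
      generalize S * getG w * Tᵀ = M
      simp [PiLp.inner_apply, dotProduct, Matrix.toLpLin_apply, mul_comm]
    rw [e1, e2, ← Matrix.mulVec_mulVec, ← Matrix.mulVec_mulVec, Matrix.dotProduct_mulVec]
    have ea : (fun j => i.1.1 j) ᵥ* S = a i := by
      ext p; simp [ha, tr, Matrix.vecMul, dotProduct, mul_comm]
    have eb : Tᵀ *ᵥ (fun j => i.2.1 j) = b i := by
      ext p; simp [hb, tr, Matrix.mulVec, dotProduct]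
    rw [ea, eb]
    simp only [dotProduct, Matrix.mulVec, Finset.mul_sum, getG]
    exact Finset.sum_congr rfl fun p _ => Finset.sum_congr rfl fun i _ => by ring
  have hlow : ∀ w, (1 - 2 * ε) * specNorm (S * getG w * Tᵀ) ≤ lse β (lin A w) := by
    intro w
    refine norm_le_of_net _ hε N N' h0 h0' hN' hn hn' fun u hu v hv => ?_
    rw [← hX w (⟨u, hu⟩, ⟨v, hv⟩)]
    exact le_lse hβ _ _
  have hup : ∀ w, lse β (lin B w) ≤
      specNorm S * en (fun i => ∑ j, T i j * w (Sum.inr (Sum.inl j)))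
      + specNorm T * en (fun i => ∑ j, S i j * w (Sum.inr (Sum.inr j)))
      + Real.log (Fintype.card (N' × N)) / β := by
    intro w
    refine lse_le hβ _ _ fun i => ?_
    have e1 : lin B w i = en (a i) * (∑ q, b i q * w (Sum.inr (Sum.inl q)))
        + en (b i) * (∑ p, a i p * w (Sum.inr (Sum.inr p))) := by
      simp [lin, hB, cB, Finset.mul_sum, mul_assoc]
    rw [e1]
    refine add_le_add ?_ ?_
    · refine (mul_le_mul_of_nonneg_left (tr_pair_le T _ (hv i) _) (en_nonneg _)).trans ?_
      exact mul_le_mul_of_nonneg_right (en_tr_le S _ (hu i)) (en_nonneg _)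
    · refine (mul_le_mul_of_nonneg_left (tr_pair_le S _ (hu i) _) (en_nonneg _)).trans ?_
      exact mul_le_mul_of_nonneg_right (en_tr_le T _ (hv i)) (en_nonneg _)
  have hcont : Continuous (fun G : Matrix (Fin k) (Fin l) ℝ => specNorm (S * G * Tᵀ)) := by
    unfold specNorm
    refine continuous_norm.comp ?_
    have : Continuous (fun M : Matrix (Fin m) (Fin n) ℝ =>
        LinearMap.toContinuousLinearMap (Matrix.toEuclideanLin M)) :=
      LinearMap.continuous_of_finiteDimensional
        ((LinearMap.toContinuousLinearMap.toLinearMap).comp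
          (Matrix.toEuclideanLin (𝕜 := ℝ) (m := Fin m) (n := Fin n)).toLinearMap)
    exact this.comp (by fun_prop)
  have : BorelSpace (Matrix (Fin k) (Fin l) ℝ) :=
    inferInstanceAs (BorelSpace (Fin k → Fin l → ℝ))
  have hint : ∫ G, specNorm (S * G * Tᵀ) ∂(stdGaussianMatrix (Fin k) (Fin l))
      = ∫ w, specNorm (S * getG w * Tᵀ) ∂(gpi (KK k l)) := by
    rw [← (getG_mp k l).map_eq, integral_map (getG_mp k l).measurable.aemeasurable]
    exact hcont.measurable.stronglyMeasurable.aestronglyMeasurable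
  have hiT := integrable_en T (κ := KK k l) (fun j => Sum.inr (Sum.inl j))
  have hiS := integrable_en S (κ := KK k l) (fun j => Sum.inr (Sum.inr j))
  have bT := integral_en_le T (κ := KK k l) (fun j => Sum.inr (Sum.inl j))
    (fun x y h => by simpa using h)
  have bS := integral_en_le S (κ := KK k l) (fun j => Sum.inr (Sum.inr j))
    (fun x y h => by simpa using h)
  have hiA := integrable_lse hβ A
  rw [hint, ← integral_const_mul]
  have s1 : ∫ w, (1 - 2 * ε) * specNorm (S * getG w * Tᵀ) ∂(gpi (KK k l))
      ≤ ∫ w, lse β (lin A w) ∂(gpi (KK k l)) := by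
    refine integral_mono_of_nonneg (Filter.Eventually.of_forall fun w => ?_) hiA
      (Filter.Eventually.of_forall hlow)
    exact mul_nonneg (by linarith) (specNorm_nonneg _)
  set fT : (KK k l → ℝ) → ℝ := fun w => en (fun i => ∑ j, T i j * w (Sum.inr (Sum.inl j)))
  set fS : (KK k l → ℝ) → ℝ := fun w => en (fun i => ∑ j, S i j * w (Sum.inr (Sum.inr j)))
  have i1 := (hiT.const_mul (specNorm S))
  have i2 := (hiS.const_mul (specNorm T))
  have i12 : Integrable (fun w => specNorm S * fT w + specNorm T * fS w) (gpi (KK k l)) :=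
    i1.add i2
  have s2 : ∫ w, lse β (lin B w) ∂(gpi (KK k l)) ≤ ∫ w,
      (specNorm S * fT w + specNorm T * fS w
      + Real.log (Fintype.card (N' × N)) / β) ∂(gpi (KK k l)) :=
    integral_mono (integrable_lse hβ B) (i12.add (integrable_const _)) hup
  rw [integral_add i12 (integrable_const _),
    integral_add i1 i2, integral_const_mul, integral_const_mul] at s2
  simp only [integral_const, probReal_univ, smul_eq_mul, one_mul] at s2
  have t1 := mul_le_mul_of_nonneg_left bT (specNorm_nonneg S)
  have t2 := mul_le_mul_of_nonneg_left bS (specNorm_nonneg T)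
  linarith

end final

/-- `E‖S G Tᵀ‖ ≤ ‖S‖‖T‖_F + ‖S‖_F‖T‖` for a standard Gaussian
matrix `G`. -/
theorem expected_opNorm_gaussian_sandwich {m k n l : ℕ}
    (S : Matrix (Fin m) (Fin k) ℝ) (T : Matrix (Fin n) (Fin l) ℝ) :
    ∫ G, specNorm (S * G * Tᵀ) ∂(stdGaussianMatrix (Fin k) (Fin l)) ≤
      specNorm S * frobNorm T + frobNorm S * specNorm T := by
  set E := ∫ G, specNorm (S * G * Tᵀ) ∂(stdGaussianMatrix (Fin k) (Fin l)) with hE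
  set R := specNorm S * frobNorm T + frobNorm S * specNorm T with hR
  have h1 : ∀ ε : ℝ, 0 < ε → ε < 1 / 2 → (1 - 2 * ε) * E ≤ R := by
    intro ε hε hε2
    obtain ⟨N, hN⟩ := main_eps S T hε hε2
    have ht : Filter.Tendsto (fun β : ℝ => R + N / β) Filter.atTop (nhds (R + 0)) :=
      tendsto_const_nhds.add (tendsto_const_nhds.div_atTop Filter.tendsto_id)
    rw [add_zero] at ht
    exact ge_of_tendsto ht ((Filter.eventually_gt_atTop 0).mono fun β hβ => hN β hβ)
  have ht : Filter.Tendsto (fun ε : ℝ => (1 - 2 * ε) * E) (nhdsWithin 0 (Set.Ioi 0))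
      (nhds ((1 - 2 * 0) * E)) :=
    Filter.Tendsto.mono_left (Continuous.tendsto (by fun_prop) 0) nhdsWithin_le_nhds
  have := le_of_tendsto ht (Filter.eventually_of_mem
    (Ioo_mem_nhdsGT (by norm_num : (0 : ℝ) < 1 / 2)) fun ε hε => h1 ε hε.1 hε.2)
  simpa using this
end

section
/- Let G be an r×(r+p) standard Gaussian random matrix with p ≥ 2, and let G† = Gᵀ(GGᵀ)⁻¹ denote its Moore–Penrose pseudoinverse (GGᵀ is invertible almost surely; on the null event where it is singular, (GGᵀ)⁻¹ is interpreted as 0). Then E‖G†‖_F² = r/(p−1), where ‖·‖_F is the Frobenius norm. -/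
open Matrix MeasureTheory ProbabilityTheory

/-- Moore–Penrose pseudoinverse of a full-row-rank matrix: `G† = Gᵀ(GGᵀ)⁻¹`
(the matrix inverse is `0` if `GGᵀ` is singular). -/
noncomputable def pinvRow {r k : Type*} [Fintype r] [Fintype k] [DecidableEq r]
    (G : Matrix r k ℝ) : Matrix k r ℝ :=
  Gᵀ * (G * Gᵀ)⁻¹

lemma stein_one (f f' : ℝ → ℝ) (C : ℝ) (hd : ∀ x, HasDerivAt f (f' x) x)
    (hC : ∀ x, |f x| ≤ C) (hC' : ∀ x, |f' x| ≤ C) :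
    ∫ x, x * f x ∂(gaussianReal 0 1) = ∫ x, f' x ∂(gaussianReal 0 1) := by
  have hfm : Measurable f := (Differentiable.continuous (fun x => (hd x).differentiableAt)).measurable
  have hf'm : Measurable f' := by
    have : f' = deriv f := funext fun x => (hd x).deriv.symm
    rw [this]; exact measurable_deriv f
  rw [integral_gaussianReal_eq_integral_smul (by norm_num),
    integral_gaussianReal_eq_integral_smul (by norm_num)]
  have hg : ∀ x, HasDerivAt (gaussianPDFReal 0 1) (-x * gaussianPDFReal 0 1 x) x := by
    intro x
    have h1 : HasDerivAt (fun x : ℝ => -(x - 0) ^ 2 / (2 * (1 : NNReal))) (-x) x := by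
      have := (((hasDerivAt_id x).sub_const 0).pow 2).neg.div_const (2 * (1 : NNReal) : ℝ)
      refine this.congr_deriv ?_
      simp; ring
    have := (h1.exp).const_mul (Real.sqrt (2 * Real.pi * (1 : NNReal)))⁻¹
    refine this.congr_deriv ?_
    simp only [gaussianPDFReal]; ring
  have hint : Integrable (gaussianPDFReal 0 1) := integrable_gaussianPDFReal 0 1
  have hxint : Integrable (fun x => -x * gaussianPDFReal 0 1 x) := by
    have := (integrable_mul_exp_neg_mul_sq (b := 1/2) (by norm_num)).const_mul
      (-(Real.sqrt (2 * Real.pi * (1 : NNReal)))⁻¹)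
    convert this using 2 with x
    rw [gaussianPDFReal]
    have : -(x - 0) ^ 2 / (2 * ((1:NNReal) : ℝ)) = -(1/2) * x ^ 2 := by simp; ring
    rw [this]; ring
  have h := integral_mul_deriv_eq_deriv_mul_of_integrable (u := f) (u' := f')
    (v := gaussianPDFReal 0 1) (v' := fun x => -x * gaussianPDFReal 0 1 x)
    (fun x _ => hd x) (fun x _ => hg x)
    (hxint.bdd_mul hfm.aestronglyMeasurable (Filter.Eventually.of_forall hC))
    (hint.bdd_mul hf'm.aestronglyMeasurable (Filter.Eventually.of_forall hC'))
    (hint.bdd_mul hfm.aestronglyMeasurable (Filter.Eventually.of_forall hC))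
  simp only [smul_eq_mul]
  have e1 : ∀ x, gaussianPDFReal 0 1 x * (x * f x) = -(f x * (-x * gaussianPDFReal 0 1 x)) :=
    fun x => by ring
  simp_rw [e1]
  rw [integral_neg, h, neg_neg]
  exact integral_congr_ae (Filter.Eventually.of_forall fun x => by simp [mul_comm])

lemma fubini_insert {α : Type} [MeasurableSpace α] (ν : Measure α) [IsProbabilityMeasure ν] {m : ℕ}
    (i : Fin (m + 1)) (f : (Fin (m + 1) → α) → ℝ) (hf : Integrable f (Measure.pi fun _ => ν)) :
    ∫ g, f g ∂(Measure.pi fun _ => ν) =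
      ∫ w, ∫ x, f (i.insertNth (α := fun _ => α) x w) ∂ν ∂(Measure.pi fun _ : Fin m => ν) := by
  have hp := (measurePreserving_piFinSuccAbove (fun _ : Fin (m+1) => ν) i).symm
  rw [← hp.integral_comp' f]
  have hf2 := (hp.integrable_comp_emb (MeasurableEquiv.measurableEmbedding _)).2 hf
  exact integral_prod_symm _ hf2

lemma stein_vec {n : ℕ} (j : Fin n) (f f' : (Fin n → ℝ) → ℝ) (C : ℝ)
    (hm : Measurable f) (hm' : Measurable f')
    (hd : ∀ v, HasDerivAt (fun t => f (Function.update v j t)) (f' v) (v j))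
    (hC : ∀ x, |f x| ≤ C) (hC' : ∀ x, |f' x| ≤ C) :
    Integrable (fun v => v j * f v) (Measure.pi fun _ : Fin n => gaussianReal 0 1) ∧
    ∫ v, v j * f v ∂(Measure.pi fun _ => gaussianReal 0 1)
      = ∫ v, f' v ∂(Measure.pi fun _ => gaussianReal 0 1) := by
  have hid : Integrable (fun x : ℝ => x) (gaussianReal 0 1) := by
    have := memLp_id_gaussianReal (μ := 0) (v := 1) 1
    have h1 : MemLp (id : ℝ → ℝ) 1 (gaussianReal 0 1) := by simpa using this
    exact memLp_one_iff_integrable.1 h1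
  have hj : Integrable (fun v : Fin n → ℝ => v j) (Measure.pi fun _ : Fin n => gaussianReal 0 1) :=
    ((measurePreserving_eval (fun _ : Fin n => gaussianReal 0 1) j).integrable_comp
      hid.aestronglyMeasurable).2 hid
  have hI : Integrable (fun v => v j * f v) (Measure.pi fun _ : Fin n => gaussianReal 0 1) :=
    hj.mul_bdd hm.aestronglyMeasurable (Filter.Eventually.of_forall hC)
  refine ⟨hI, ?_⟩
  obtain _ | m := n
  · exact j.elim0
  rw [fubini_insert _ j _ hI, fubini_insert _ j f'
    (Integrable.of_bound hm'.aestronglyMeasurable C (Filter.Eventually.of_forall hC'))]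
  congr 1; ext w
  simp only [Fin.insertNth_apply_same]
  refine stein_one (fun x => f (j.insertNth (α := fun _ => ℝ) x w)) _ C ?_ (fun x => hC _) (fun x => hC' _)
  intro x
  have := hd (j.insertNth (α := fun _ => ℝ) x w)
  simpa using this

lemma stein_mat {r n : ℕ} (i : Fin r) (j : Fin n) (f f' : (Fin r → Fin n → ℝ) → ℝ) (C : ℝ)
    (hm : Measurable f) (hm' : Measurable f')
    (hd : ∀ G, HasDerivAt (fun t => f (Function.update G i (Function.update (G i) j t)))
      (f' G) (G i j))
    (hC : ∀ x, |f x| ≤ C) (hC' : ∀ x, |f' x| ≤ C) :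
    Integrable (fun G => G i j * f G)
      (Measure.pi fun _ : Fin r => Measure.pi fun _ : Fin n => gaussianReal 0 1) ∧
    ∫ G, G i j * f G ∂(Measure.pi fun _ : Fin r => Measure.pi fun _ : Fin n => gaussianReal 0 1)
      = ∫ G, f' G ∂(Measure.pi fun _ : Fin r => Measure.pi fun _ : Fin n => gaussianReal 0 1) := by
  have hid : Integrable (fun v : Fin n → ℝ => v j)
      (Measure.pi fun _ : Fin n => gaussianReal 0 1) := by
    have := (stein_vec j (fun _ => 1) (fun _ => 0) 1 measurable_const measurable_const
      (fun v => hasDerivAt_const _ _) (by simp) (by simp)).1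
    simpa using this
  have hj : Integrable (fun G : Fin r → Fin n → ℝ => G i j)
      (Measure.pi fun _ : Fin r => Measure.pi fun _ : Fin n => gaussianReal 0 1) :=
    ((measurePreserving_eval
      (fun _ : Fin r => Measure.pi fun _ : Fin n => gaussianReal 0 1) i).integrable_comp
      hid.aestronglyMeasurable).2 hid
  have hI : Integrable (fun G => G i j * f G)
      (Measure.pi fun _ : Fin r => Measure.pi fun _ : Fin n => gaussianReal 0 1) :=
    hj.mul_bdd hm.aestronglyMeasurable (Filter.Eventually.of_forall hC)
  refine ⟨hI, ?_⟩
  obtain _ | m := r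
  · exact i.elim0
  rw [fubini_insert _ i _ hI, fubini_insert _ i f'
    (Integrable.of_bound hm'.aestronglyMeasurable C (Filter.Eventually.of_forall hC'))]
  congr 1; ext w
  simp only [Fin.insertNth_apply_same]
  have hins : Measurable fun x : Fin n → ℝ => i.insertNth (α := fun _ => Fin n → ℝ) x w := by
    refine measurable_pi_iff.2 fun k => ?_
    refine Fin.succAboveCases i ?_ (fun k => ?_) k
    · simpa using measurable_id'
    · simp
  refine (stein_vec j (fun x => f (i.insertNth (α := fun _ => Fin n → ℝ) x w)) _ C (hm.comp hins)
    (hm'.comp hins) ?_ (fun x => hC _) (fun x => hC' _)).2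
  intro x
  have := hd (i.insertNth (α := fun _ => Fin n → ℝ) x w)
  simpa using this

noncomputable def RR {r n : ℕ} (ε : ℝ) (G : Matrix (Fin r) (Fin n) ℝ) : Matrix (Fin r) (Fin r) ℝ :=
  (G * Gᵀ + ε • (1 : Matrix (Fin r) (Fin r) ℝ))⁻¹

section det
variable {r n : ℕ} {ε : ℝ} (hε : 0 < ε) (G : Matrix (Fin r) (Fin n) ℝ)

lemma posSemidef_GGt : (G * Gᵀ).PosSemidef := by
  simpa using posSemidef_self_mul_conjTranspose G

include hε

lemma posDef_W : (G * Gᵀ + ε • (1 : Matrix (Fin r) (Fin r) ℝ)).PosDef :=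
  PosDef.posSemidef_add (posSemidef_GGt G) (PosDef.one.smul hε)

lemma isUnit_W : IsUnit (G * Gᵀ + ε • (1 : Matrix (Fin r) (Fin r) ℝ)).det :=
  (Matrix.isUnit_iff_isUnit_det _).1 (posDef_W hε G).isUnit

lemma RR_psd : (RR ε G).PosSemidef := (posDef_W hε G).inv.posSemidef

lemma RR_transpose : (RR ε G)ᵀ = RR ε G := by
  simpa [IsHermitian] using (RR_psd hε G).isHermitian

lemma RR_mul : RR ε G * (G * Gᵀ) = 1 - ε • RR ε G := by
  have := Matrix.nonsing_inv_mul _ (isUnit_W hε G)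
  rw [mul_add] at this
  rw [eq_sub_iff_add_eq, ← this]
  simp [RR]

lemma mul_RR : (G * Gᵀ) * RR ε G = 1 - ε • RR ε G := by
  have := Matrix.mul_nonsing_inv _ (isUnit_W hε G)
  rw [add_mul] at this
  rw [eq_sub_iff_add_eq, ← this]
  simp [RR]

lemma trRR_nonneg : 0 ≤ (RR ε G).trace := (RR_psd hε G).trace_nonneg

lemma trace_GRG : (Gᵀ * RR ε G * G).trace = r - ε * (RR ε G).trace := by
  rw [Matrix.trace_mul_comm, ← Matrix.mul_assoc, mul_RR hε]
  simp

lemma GRG_psd : (Gᵀ * RR ε G * G).PosSemidef := by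
  simpa using (RR_psd hε G).conjTranspose_mul_mul_same G

lemma eps_trRR_le : ε * (RR ε G).trace ≤ r := by
  have := (GRG_psd hε G).trace_nonneg
  rw [trace_GRG hε] at this; linarith

lemma trRR_le : (RR ε G).trace ≤ r / ε := by
  rw [le_div_iff₀ hε, mul_comm]; exact eps_trRR_le hε G

lemma trace_RR_sq : (RR ε G * RR ε G).trace = ∑ i, ∑ j, (RR ε G i j) ^ 2 := by
  nth_rw 2 [← RR_transpose hε G]
  simp [Matrix.trace, Matrix.mul_apply, sq]

lemma trace_RR_sq_nonneg : 0 ≤ (RR ε G * RR ε G).trace := by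
  rw [trace_RR_sq hε]; positivity

lemma frob_GtR : ∑ i, ∑ j, ((Gᵀ * RR ε G) j i) ^ 2
    = (RR ε G).trace - ε * (RR ε G * RR ε G).trace := by
  have h : ((Gᵀ * RR ε G)ᵀ * (Gᵀ * RR ε G)).trace = ∑ i, ∑ j, ((Gᵀ * RR ε G) j i) ^ 2 := by
    simp only [Matrix.trace, Matrix.mul_apply (M := (Gᵀ * RR ε G)ᵀ), Matrix.diag_apply,
      Matrix.transpose_apply (M := Gᵀ * RR ε G), sq]
  rw [← h, Matrix.transpose_mul, Matrix.transpose_transpose, RR_transpose hε, Matrix.mul_assoc,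
    ← Matrix.mul_assoc G, mul_RR hε, mul_sub, Matrix.trace_sub]
  simp

lemma eps_trace_sq_le : ε * (RR ε G * RR ε G).trace ≤ (RR ε G).trace := by
  have h := frob_GtR hε G
  have : 0 ≤ ∑ i, ∑ j, ((Gᵀ * RR ε G) j i) ^ 2 := by positivity
  linarith

lemma RR_diag_nonneg (i : Fin r) : 0 ≤ RR ε G i i := (RR_psd hε G).diag_nonneg

lemma RR_diag_le (i : Fin r) : RR ε G i i ≤ r / ε :=
  (Finset.single_le_sum (f := fun i => RR ε G i i) (fun i _ => RR_diag_nonneg hε G i)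
    (Finset.mem_univ i)).trans (trRR_le hε G)

lemma GRG_diag_nonneg (i : Fin n) : 0 ≤ (Gᵀ * RR ε G * G) i i := (GRG_psd hε G).diag_nonneg

lemma GRG_diag_le (i : Fin n) : (Gᵀ * RR ε G * G) i i ≤ r := by
  have h1 := (Finset.single_le_sum (f := fun i => (Gᵀ * RR ε G * G) i i)
    (fun i _ => GRG_diag_nonneg hε G i) (Finset.mem_univ i))
  have h2 := trace_GRG hε G
  have := mul_nonneg hε.le (trRR_nonneg hε G)
  simp only [Matrix.trace, Matrix.diag_apply] at *
  linarith

lemma GR_sq_le (i : Fin r) (j : Fin n) : ((Gᵀ * RR ε G) j i) ^ 2 ≤ r / ε := by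
  have h1 : ((Gᵀ * RR ε G) j i) ^ 2 ≤ ∑ j, ((Gᵀ * RR ε G) j i) ^ 2 :=
    Finset.single_le_sum (f := fun j => ((Gᵀ * RR ε G) j i) ^ 2) (fun _ _ => sq_nonneg _)
      (Finset.mem_univ j)
  have h2 : ∑ j, ((Gᵀ * RR ε G) j i) ^ 2 ≤ ∑ i, ∑ j, ((Gᵀ * RR ε G) j i) ^ 2 :=
    Finset.single_le_sum (f := fun i => ∑ j, ((Gᵀ * RR ε G) j i) ^ 2)
      (fun _ _ => by positivity) (Finset.mem_univ i)
  have h3 := frob_GtR hε G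
  have h4 := mul_nonneg hε.le (trace_RR_sq_nonneg hε G)
  have h5 := trRR_le hε G
  linarith

/-- the singular event -/
lemma one_le_of_singular (hs : ¬ IsUnit (G * Gᵀ).det) : 1 ≤ ε * (RR ε G).trace := by
  rw [isUnit_iff_ne_zero, not_not] at hs
  obtain ⟨v, hv, hv0⟩ := Matrix.exists_mulVec_eq_zero_iff.2 hs
  have h1 : ε • (RR ε G *ᵥ v) = v := by
    have := congrArg (fun M => M *ᵥ v) (RR_mul hε G)
    simp only [← Matrix.mulVec_mulVec, hv0, Matrix.mulVec_zero, Matrix.sub_mulVec,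
      Matrix.one_mulVec, Matrix.smul_mulVec] at this
    exact (sub_eq_zero.1 this.symm).symm
  have hpos : 0 < ∑ i, (v i) ^ 2 := by
    obtain ⟨i, hi⟩ := Function.ne_iff.1 hv
    exact Finset.sum_pos' (fun _ _ => sq_nonneg _) ⟨i, Finset.mem_univ _, by
      have : v i ≠ 0 := hi
      positivity⟩
  have h2 : ∑ i, (v i) ^ 2 ≤ ε ^ 2 * (RR ε G * RR ε G).trace * ∑ i, (v i) ^ 2 := by
    calc ∑ i, (v i) ^ 2 = ∑ i, ε ^ 2 * (∑ j, RR ε G i j * v j) ^ 2 := by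
          refine Finset.sum_congr rfl fun i _ => ?_
          conv_lhs => rw [← h1]
          simp [Matrix.mulVec, dotProduct, mul_pow]
      _ ≤ ∑ i, ε ^ 2 * ((∑ j, RR ε G i j ^ 2) * ∑ j, v j ^ 2) := by
          gcongr with i _
          exact Finset.sum_mul_sq_le_sq_mul_sq _ _ _
      _ = _ := by
          rw [trace_RR_sq hε, ← Finset.mul_sum, ← Finset.sum_mul]; ring
  have h3 : 1 ≤ ε ^ 2 * (RR ε G * RR ε G).trace := by
    by_contra! h
    nlinarith
  have h4 := mul_le_mul_of_nonneg_left (eps_trace_sq_le hε G) hε.le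
  nlinarith

lemma trRR_le_inv (hs : IsUnit (G * Gᵀ).det) : (RR ε G).trace ≤ ((G * Gᵀ)⁻¹).trace := by
  have hV : ((G * Gᵀ)⁻¹).PosSemidef := (posSemidef_GGt G).inv
  have e1 : (G * Gᵀ)⁻¹ - RR ε G = ε • ((G * Gᵀ)⁻¹ * RR ε G) := by
    have := congrArg (fun M => (G * Gᵀ)⁻¹ * M) (mul_RR hε G)
    simp only [← mul_assoc ((G * Gᵀ)⁻¹)] at this
    rw [Matrix.nonsing_inv_mul _ hs, one_mul] at this
    rw [mul_sub, mul_one, Matrix.mul_smul] at this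
    rw [sub_eq_iff_eq_add, ← sub_eq_iff_eq_add']
    exact this.symm
  have e2 : RR ε G = (RR ε G * G) * (RR ε G * G)ᵀ + ε • (RR ε G * (RR ε G)ᵀ) := by
    rw [Matrix.transpose_mul, RR_transpose hε, Matrix.mul_assoc (RR ε G), ← Matrix.mul_assoc G, mul_RR hε,
      mul_sub]
    simp
  have e3 : 0 ≤ ((G * Gᵀ)⁻¹ * RR ε G).trace := by
    rw [e2, mul_add, Matrix.trace_add, ← Matrix.mul_assoc, Matrix.trace_mul_comm, Matrix.mul_smul,
      Matrix.trace_smul, ← mul_assoc ((G * Gᵀ)⁻¹) (RR ε G), Matrix.trace_mul_comm _ ((RR ε G)ᵀ)]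
    have p1 := (hV.conjTranspose_mul_mul_same (RR ε G * G)).trace_nonneg
    have p2 := (hV.conjTranspose_mul_mul_same (RR ε G)).trace_nonneg
    simp only [conjTranspose_eq_transpose_of_trivial, Matrix.mul_assoc, smul_eq_mul] at *
    have := mul_nonneg hε.le p2
    linarith
  have := congrArg Matrix.trace e1
  rw [Matrix.trace_sub, Matrix.trace_smul, smul_eq_mul] at this
  have := mul_nonneg hε.le e3
  linarith

lemma continuous_RR : Continuous fun G : Matrix (Fin r) (Fin n) ℝ => RR ε G := by
  simp only [RR, Matrix.inv_def, Ring.inverse_eq_inv']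
  have hW : Continuous fun G : Matrix (Fin r) (Fin n) ℝ =>
      G * Gᵀ + ε • (1 : Matrix (Fin r) (Fin r) ℝ) :=
    (continuous_id.matrix_mul continuous_id.matrix_transpose).add continuous_const
  exact (hW.matrix_det.inv₀ fun G => (isUnit_W hε G).ne_zero).smul hW.matrix_adjugate
end det

lemma tendsto_RR {r n : ℕ} (G : Matrix (Fin r) (Fin n) ℝ) (hs : IsUnit (G * Gᵀ).det) :
    Filter.Tendsto (fun ε : ℝ => RR ε G) (nhds 0) (nhds (G * Gᵀ)⁻¹) := by
  have hW : Continuous fun ε : ℝ => G * Gᵀ + ε • (1 : Matrix (Fin r) (Fin r) ℝ) := by fun_prop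
  have h0 : G * Gᵀ + (0 : ℝ) • (1 : Matrix (Fin r) (Fin r) ℝ) = G * Gᵀ := by simp
  have : ContinuousAt (fun ε : ℝ => RR ε G) 0 := by
    simp only [RR, Matrix.inv_def, Ring.inverse_eq_inv']
    refine ContinuousAt.smul (ContinuousAt.inv₀ hW.matrix_det.continuousAt ?_)
      hW.matrix_adjugate.continuousAt
    rw [h0]; exact hs.ne_zero
  have h := this.tendsto
  simp only [RR, h0] at h
  exact h

section deriv
attribute [local instance] Matrix.linftyOpNormedRing Matrix.linftyOpNormedAlgebra

lemma hasDerivAt_RR {r n : ℕ} {ε : ℝ} (hε : 0 < ε) (G E : Matrix (Fin r) (Fin n) ℝ) (c : ℝ)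
    (k l : Fin r) :
    HasDerivAt (fun t => RR ε (G + (t - c) • E) k l)
      (-(RR ε G * (E * Gᵀ + G * Eᵀ) * RR ε G) k l) c := by
  set W := G * Gᵀ + ε • (1 : Matrix (Fin r) (Fin r) ℝ) with hWdef
  have hs : HasDerivAt (fun t : ℝ => t - c) 1 c := (hasDerivAt_id c).sub_const c
  have hW : HasDerivAt (fun t => W + ((t - c) • (E * Gᵀ + G * Eᵀ) + (t - c) ^ 2 • (E * Eᵀ)))
      (E * Gᵀ + G * Eᵀ) c := by
    have := ((hs.smul_const (E * Gᵀ + G * Eᵀ)).add ((hs.pow 2).smul_const (E * Eᵀ))).const_add W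
    refine this.congr_deriv ?_
    simp
  have hWe : ∀ t, W + ((t - c) • (E * Gᵀ + G * Eᵀ) + (t - c) ^ 2 • (E * Eᵀ)) =
      (G + (t - c) • E) * (G + (t - c) • E)ᵀ + ε • (1 : Matrix (Fin r) (Fin r) ℝ) := by
    intro t
    simp only [hWdef, Matrix.transpose_add, Matrix.transpose_smul, Matrix.mul_add, Matrix.add_mul,
      Matrix.smul_mul, Matrix.mul_smul, smul_add, sq, mul_smul]
    abel
  have hu : IsUnit W := (posDef_W hε G).isUnit
  obtain ⟨u, hu⟩ := hu
  have hR := hasFDerivAt_ringInverse (𝕜 := ℝ) u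
  have hui : (↑u⁻¹ : Matrix (Fin r) (Fin r) ℝ) = RR ε G := by
    rw [Matrix.coe_units_inv, hu, RR]
  have hc : W + ((c - c) • (E * Gᵀ + G * Eᵀ) + (c - c) ^ 2 • (E * Eᵀ)) = u := by
    rw [hu]; simp
  rw [← hc] at hR
  have h1 := hR.comp_hasDerivAt c hW
  have h2 := ((Matrix.entryLinearMap ℝ ℝ k l).toContinuousLinearMap.hasFDerivAt).comp_hasDerivAt c h1
  have h3 : (fun t => RR ε (G + (t - c) • E) k l) =
      (⇑(Matrix.entryLinearMap ℝ ℝ k l).toContinuousLinearMap ∘ (Ring.inverse ∘ fun t =>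
        W + ((t - c) • (E * Gᵀ + G * Eᵀ) + (t - c) ^ 2 • (E * Eᵀ)))) := by
    ext t
    simp only [Function.comp, hWe t, RR, Matrix.nonsing_inv_eq_ringInverse]
    rfl
  rw [h3]
  refine h2.congr_deriv ?_
  simp only [hui, _root_.neg_apply, ContinuousLinearMap.mulLeftRight_apply]
  rfl
end deriv

lemma update_aux {r n : ℕ} (G : Fin r → Fin n → ℝ) (i : Fin r) (j : Fin n) (t : ℝ)
    (a : Fin r) (b : Fin n) : Function.update G i (Function.update (G i) j t) a b =
      G a b + (t - G i j) * (if i = a ∧ j = b then 1 else 0) := by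
  by_cases ha : a = i
  · subst ha
    by_cases hb : b = j
    · subst hb; simp
    · simp [hb, Ne.symm hb]
  · simp [ha, Ne.symm ha]

lemma update_eq {r n : ℕ} (G : Fin r → Fin n → ℝ) (i : Fin r) (j : Fin n) (t : ℝ) :
    Function.update G i (Function.update (G i) j t) =
      (show Matrix (Fin r) (Fin n) ℝ from G) + (t - G i j) • Matrix.single i j (1 : ℝ) := by
  funext a b
  rw [Matrix.add_apply, Matrix.smul_apply, Matrix.single_apply]
  exact update_aux G i j t a b

lemma hasDerivAt_GR {r n : ℕ} {ε : ℝ} (hε : 0 < ε) (G : Matrix (Fin r) (Fin n) ℝ)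
    (i : Fin r) (j : Fin n) :
    HasDerivAt (fun t => ((G + (t - G i j) • Matrix.single i j (1 : ℝ))ᵀ *
        RR ε (G + (t - G i j) • Matrix.single i j (1 : ℝ))) j i)
      (RR ε G i i - ((Gᵀ * RR ε G) j i) ^ 2 - (Gᵀ * RR ε G * G) j j * RR ε G i i) (G i j) := by
  set E : Matrix (Fin r) (Fin n) ℝ := Matrix.single i j (1 : ℝ) with hE
  set c := G i j
  have hs : HasDerivAt (fun t : ℝ => t - c) 1 c := (hasDerivAt_id c).sub_const c
  have h1 : HasDerivAt (fun t => ∑ k, (G k j + (t - c) * E k j) * RR ε (G + (t - c) • E) k i)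
      (∑ k, ((1 * E k j) * RR ε (G + (c - c) • E) k i +
        (G k j + (c - c) * E k j) * (-(RR ε G * (E * Gᵀ + G * Eᵀ) * RR ε G) k i))) c :=
    HasDerivAt.fun_sum fun k _ => ((hs.mul_const (E k j)).const_add (G k j)).mul
      (hasDerivAt_RR hε G E c k i)
  have h2 : (fun t => ((G + (t - c) • E)ᵀ * RR ε (G + (t - c) • E)) j i) =
      fun t => ∑ k, (G k j + (t - c) * E k j) * RR ε (G + (t - c) • E) k i := by
    ext t; simp [Matrix.mul_apply]
  rw [h2]
  refine h1.congr_deriv ?_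
  have a1 : ∑ k, E k j * RR ε G k i = RR ε G i i := by
    rw [Finset.sum_eq_single i]
    · simp [hE]
    · intro b _ hb; simp [hE, Matrix.single_apply, Ne.symm hb]
    · simp
  have a2 : ∑ k, G k j * (RR ε G * (E * Gᵀ + G * Eᵀ) * RR ε G) k i =
      (Gᵀ * RR ε G * E * (Gᵀ * RR ε G)) j i + ((Gᵀ * RR ε G * G) * Eᵀ * RR ε G) j i := by
    rw [← Matrix.add_apply]
    trans (Gᵀ * (RR ε G * (E * Gᵀ + G * Eᵀ) * RR ε G)) j i
    · simp [Matrix.mul_apply (M := Gᵀ)]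
    · simp only [Matrix.mul_add, Matrix.add_mul, Matrix.mul_assoc]
  have a3 : (Gᵀ * RR ε G * E * (Gᵀ * RR ε G)) j i = ((Gᵀ * RR ε G) j i) ^ 2 := by
    rw [Matrix.mul_apply, Finset.sum_eq_single j]
    · simp [hE, sq]
    · intro b _ hb; simp [hE, hb]
    · simp
  have a4 : ((Gᵀ * RR ε G * G) * Eᵀ * RR ε G) j i = (Gᵀ * RR ε G * G) j j * RR ε G i i := by
    rw [Matrix.mul_apply, Finset.sum_eq_single i]
    · simp [hE, Matrix.transpose_single]
    · intro b _ hb; simp [hE, hb, Matrix.transpose_single]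
    · simp
  simp only [sub_self, zero_smul, zero_mul, add_zero, one_mul, mul_neg, Finset.sum_add_distrib,
    Finset.sum_neg_distrib]
  rw [a1, a2, a3, a4]; ring

lemma measurable_RR {r n : ℕ} {ε : ℝ} (hε : 0 < ε) (k l : Fin r) :
    Measurable fun G : Matrix (Fin r) (Fin n) ℝ => RR ε G k l := by
  have h : Continuous fun G : Matrix (Fin r) (Fin n) ℝ => RR ε G k l :=
    (continuous_RR (n := n) hε).matrix_elem k l
  have h' : Continuous (X := Fin r → Fin n → ℝ) fun G => RR ε (Matrix.of G) k l := h
  exact h'.measurable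

lemma measurable_ent {r n : ℕ} (k : Fin r) (l : Fin n) :
    Measurable fun G : Matrix (Fin r) (Fin n) ℝ => G k l :=
  (measurable_pi_apply (X := fun _ : Fin n => ℝ) l).comp
    (measurable_pi_apply (X := fun _ : Fin r => Fin n → ℝ) k)

lemma measurable_GR {r n : ℕ} {ε : ℝ} (hε : 0 < ε) (j : Fin n) (i : Fin r) :
    Measurable fun G : Matrix (Fin r) (Fin n) ℝ =>
      (Gᵀ * RR ε G) j i := by
  simp only [Matrix.mul_apply, Matrix.transpose_apply]
  exact Finset.measurable_sum _ fun k _ => (measurable_ent k j).mul (measurable_RR hε k i)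

lemma measurable_GRG {r n : ℕ} {ε : ℝ} (hε : 0 < ε) (j : Fin n) :
    Measurable fun G : Matrix (Fin r) (Fin n) ℝ =>
      (Gᵀ * RR ε G
        * G) j j := by
  have h : ∀ G : Matrix (Fin r) (Fin n) ℝ, (Gᵀ * RR ε G * G) j j =
      ∑ k, (Gᵀ * RR ε G) j k * G k j := fun G => Matrix.mul_apply
  simp only [h]
  exact Finset.measurable_sum _ fun k _ => (measurable_GR hε j k).mul (measurable_ent k j)

lemma measurable_tr {r n : ℕ} {ε : ℝ} (hε : 0 < ε) :
    Measurable fun G : Matrix (Fin r) (Fin n) ℝ => (RR ε G).trace := by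
  simp only [Matrix.trace, Matrix.diag_apply]
  exact Finset.measurable_sum _ fun k _ => measurable_RR hε k k

lemma measurable_trsq {r n : ℕ} {ε : ℝ} (hε : 0 < ε) :
    Measurable fun G : Matrix (Fin r) (Fin n) ℝ => (RR ε G *
      RR ε G).trace := by
  simp only [Matrix.trace, Matrix.diag_apply, Matrix.mul_apply]
  exact Finset.measurable_sum _ fun k _ => Finset.measurable_sum _ fun l _ =>
    (measurable_RR hε k l).mul (measurable_RR hε l k)

noncomputable abbrev gm (r n : ℕ) : Measure (Matrix (Fin r) (Fin n) ℝ) :=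
  stdGaussianMatrix (Fin r) (Fin n)

instance (r n : ℕ) : IsProbabilityMeasure (stdGaussianMatrix (Fin r) (Fin n)) := by
  unfold stdGaussianMatrix
  exact inferInstanceAs (IsProbabilityMeasure
    (Measure.pi fun _ : Fin r => Measure.pi fun _ : Fin n => gaussianReal 0 1))

lemma stein_RR {r n : ℕ} {ε : ℝ} (hε : 0 < ε) (i : Fin r) (j : Fin n) :
    Integrable (fun G : Matrix (Fin r) (Fin n) ℝ => G i j * (Gᵀ * RR ε G) j i) (gm r n) ∧
    ∫ G : Matrix (Fin r) (Fin n) ℝ, G i j * (Gᵀ * RR ε G) j i ∂(gm r n) =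
    ∫ G : Matrix (Fin r) (Fin n) ℝ, (RR ε G i i - ((Gᵀ * RR ε G) j i) ^ 2
      - (Gᵀ * RR ε G * G) j j * RR ε G i i) ∂(gm r n) := by
  have hre : 0 ≤ (r : ℝ) / ε := by positivity
  refine stein_mat i j (fun G : Matrix (Fin r) (Fin n) ℝ => (Gᵀ * RR ε G) j i)
    (fun G : Matrix (Fin r) (Fin n) ℝ => RR ε G i i - ((Gᵀ * RR ε G) j i) ^ 2
      - (Gᵀ * RR ε G * G) j j * RR ε G i i)
    (1 + r / ε + r / ε + r * (r / ε)) (measurable_GR hε j i)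
    (((measurable_RR hε i i).sub ((measurable_GR hε j i).pow_const 2)).sub
      ((measurable_GRG hε j).mul (measurable_RR hε i i))) ?_ ?_ ?_
  · intro G
    have := hasDerivAt_GR hε G i j
    refine this.congr_of_eventuallyEq (Filter.Eventually.of_forall fun t => ?_)
    exact congrArg (fun M : Matrix (Fin r) (Fin n) ℝ => (Mᵀ * RR ε M) j i) (update_eq G i j t)
  · intro G
    have h := GR_sq_le hε G i j
    have : 0 ≤ (r : ℝ) * (r / ε) := by positivity
    rw [abs_le]
    constructor <;> nlinarith
  · intro G
    have h := GR_sq_le hε G i j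
    have h1 := RR_diag_le hε G i
    have h2 := RR_diag_nonneg hε G i
    have h3 := GRG_diag_nonneg hε G j
    have h4 := GRG_diag_le hε G j
    have h5 := mul_le_mul h4 h1 h2 (Nat.cast_nonneg r)
    have h6 := mul_nonneg h3 h2
    have h7 := sq_nonneg ((Gᵀ * RR ε G) j i)
    rw [abs_le]
    constructor <;> linarith

lemma integrable_tr {r n : ℕ} {ε : ℝ} (hε : 0 < ε) :
    Integrable (fun G : Matrix (Fin r) (Fin n) ℝ => (RR ε G).trace) (gm r n) :=
  Integrable.of_bound (measurable_tr hε).aestronglyMeasurable (r / ε)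
    (Filter.Eventually.of_forall fun G => by
      rw [Real.norm_eq_abs, abs_of_nonneg (trRR_nonneg hε G)]; exact trRR_le hε G)

lemma rest_bound {r n : ℕ} {ε : ℝ} (hε : 0 < ε) (G : Matrix (Fin r) (Fin n) ℝ) :
    0 ≤ ε * ((RR ε G * RR ε G).trace + (RR ε G).trace ^ 2) ∧
    ε * ((RR ε G * RR ε G).trace + (RR ε G).trace ^ 2) ≤ (1 + r) * (RR ε G).trace := by
  have h1 := trace_RR_sq_nonneg hε G
  have h2 := eps_trace_sq_le hε G
  have h3 := mul_le_mul_of_nonneg_right (eps_trRR_le hε G) (trRR_nonneg hε G)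
  exact ⟨by positivity, by nlinarith⟩

lemma measurable_rest {r n : ℕ} {ε : ℝ} (hε : 0 < ε) :
    Measurable (fun G : Matrix (Fin r) (Fin n) ℝ =>
      ε * ((RR ε G * RR ε G).trace + (RR ε G).trace ^ 2)) :=
  ((measurable_trsq hε).add ((measurable_tr hε).pow_const 2)).const_mul ε

lemma integrable_rest {r n : ℕ} {ε : ℝ} (hε : 0 < ε) :
    Integrable (fun G : Matrix (Fin r) (Fin n) ℝ =>
      ε * ((RR ε G * RR ε G).trace + (RR ε G).trace ^ 2)) (gm r n) := by
  refine ((integrable_tr hε).const_mul (1 + r : ℝ)).mono'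
    (measurable_rest hε).aestronglyMeasurable (Filter.Eventually.of_forall fun G => ?_)
  rw [Real.norm_eq_abs, abs_of_nonneg (rest_bound hε G).1]; exact (rest_bound hε G).2

lemma key_eps {r n : ℕ} {ε : ℝ} (hε : 0 < ε) :
    r - ε * ∫ G : Matrix (Fin r) (Fin n) ℝ, (RR ε G).trace ∂(gm r n) =
    ((n : ℝ) - r - 1) * ∫ G : Matrix (Fin r) (Fin n) ℝ, (RR ε G).trace ∂(gm r n) +
    ∫ G : Matrix (Fin r) (Fin n) ℝ, ε * ((RR ε G * RR ε G).trace + (RR ε G).trace ^ 2) ∂(gm r n) := by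
  have hI := integrable_tr (r := r) (n := n) hε
  have hJ := integrable_rest (r := r) (n := n) hε
  have hre : 0 ≤ (r : ℝ) / ε := by positivity
  have hF' : ∀ (i : Fin r) (j : Fin n), Integrable (fun G : Matrix (Fin r) (Fin n) ℝ =>
      (RR ε G i i - ((Gᵀ * RR ε G) j i) ^ 2
      - (Gᵀ * RR ε G * G) j j * RR ε G i i)) (gm r n) := by
    intro i j
    refine Integrable.of_bound (((measurable_RR hε i i).sub
      ((measurable_GR hε j i).pow_const 2)).sub
      ((measurable_GRG hε j).mul (measurable_RR hε i i))).aestronglyMeasurable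
      (r / ε + r / ε + r * (r / ε)) (Filter.Eventually.of_forall fun G => ?_)
    have h := GR_sq_le hε G i j
    have h1 := RR_diag_le hε G i
    have h2 := RR_diag_nonneg hε G i
    have h3 := GRG_diag_nonneg hε G j
    have h4 := GRG_diag_le hε G j
    have h5 := mul_le_mul h4 h1 h2 (Nat.cast_nonneg r)
    have h6 := mul_nonneg h3 h2
    have h7 := sq_nonneg ((Gᵀ * RR ε G) j i)
    rw [Real.norm_eq_abs, abs_le]
    constructor <;> linarith
  have hL : r - ε * ∫ G : Matrix (Fin r) (Fin n) ℝ, (RR ε G).trace ∂(gm r n) =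
      ∑ i : Fin r, ∑ j : Fin n, ∫ G : Matrix (Fin r) (Fin n) ℝ,
        G i j * (Gᵀ * RR ε G) j i ∂(gm r n) := by
    simp_rw [← integral_finsetSum _ fun j _ => (stein_RR hε _ j).1]
    rw [← integral_finsetSum _ fun i _ => integrable_finsetSum _ fun j _ => (stein_RR hε i j).1]
    trans ∫ G : Matrix (Fin r) (Fin n) ℝ, ((r : ℝ) - ε * (RR ε G).trace) ∂(gm r n)
    · rw [integral_sub (integrable_const _) (hI.const_mul ε), integral_const_mul]; simp
    · congr 1; funext G
      have h := mul_RR hε G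
      have h2 := congrArg Matrix.trace h
      rw [Matrix.mul_assoc] at h2
      simp only [Matrix.trace_sub, Matrix.trace_one, Fintype.card_fin, Matrix.trace_smul,
        smul_eq_mul] at h2
      rw [← h2]
      simp only [Matrix.trace, Matrix.diag_apply]
      exact Finset.sum_congr rfl fun i _ => Matrix.mul_apply
  have hRt : ((n : ℝ) - r - 1) * ∫ G : Matrix (Fin r) (Fin n) ℝ, (RR ε G).trace ∂(gm r n) +
      ∫ G : Matrix (Fin r) (Fin n) ℝ, ε * ((RR ε G * RR ε G).trace + (RR ε G).trace ^ 2) ∂(gm r n) =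
      ∑ i : Fin r, ∑ j : Fin n, ∫ G : Matrix (Fin r) (Fin n) ℝ,
      (RR ε G i i - ((Gᵀ * RR ε G) j i) ^ 2
      - (Gᵀ * RR ε G * G) j j * RR ε G i i) ∂(gm r n) := by
    simp_rw [← integral_finsetSum _ fun j _ => hF' _ j]
    rw [← integral_finsetSum _ fun i _ => integrable_finsetSum _ fun j _ => hF' i j]
    rw [← integral_const_mul, ← integral_add (hI.const_mul _) hJ]
    congr 1; funext G
    simp only [Finset.sum_sub_distrib]
    have h1 := frob_GtR hε G
    have h2 := trace_GRG hε G
    have h3 : ∑ i, ∑ j, (Gᵀ * RR ε G * G) j j * RR ε G i i =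
        (Gᵀ * RR ε G * G).trace * (RR ε G).trace := by
      simp only [Matrix.trace, Matrix.diag_apply, ← Finset.sum_mul, ← Finset.mul_sum]
    have h4 : ∑ i : Fin r, ∑ j : Fin n, RR ε G i i = n * (RR ε G).trace := by
      simp [Matrix.trace, Finset.mul_sum]
    rw [h3, h4, h2]
    erw [h1]
    ring
  rw [hL, hRt]
  exact Finset.sum_congr rfl fun i _ => Finset.sum_congr rfl fun j _ => (stein_RR hε i j).2

lemma int_tr_le {r p : ℕ} (hp : 2 ≤ p) {ε : ℝ} (hε : 0 < ε) :
    ∫ G : Matrix (Fin r) (Fin (r + p)) ℝ, (RR ε G).trace ∂(gm r (r + p)) ≤ r := by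
  have h := key_eps (r := r) (n := r + p) hε
  have h0 : 0 ≤ ∫ G : Matrix (Fin r) (Fin (r + p)) ℝ, (RR ε G).trace ∂(gm r (r + p)) :=
    integral_nonneg fun G => trRR_nonneg hε G
  have h1 : 0 ≤ ∫ G : Matrix (Fin r) (Fin (r + p)) ℝ,
      ε * ((RR ε G * RR ε G).trace + (RR ε G).trace ^ 2) ∂(gm r (r + p)) :=
    integral_nonneg fun G => (rest_bound hε G).1
  have hp' : (2 : ℝ) ≤ p := by exact_mod_cast hp
  push_cast at h
  have h2 := mul_nonneg hε.le h0
  nlinarith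

lemma ae_isUnit {r p : ℕ} (hp : 2 ≤ p) :
    ∀ᵐ G : Matrix (Fin r) (Fin (r + p)) ℝ ∂(gm r (r + p)), IsUnit (G * Gᵀ).det := by
  rw [ae_iff]
  set S := {G : Matrix (Fin r) (Fin (r + p)) ℝ | ¬ IsUnit (G * Gᵀ).det}
  have hb : ∀ ε : ℝ, 0 < ε → (gm r (r + p)).real S ≤ ε * r := by
    intro ε hε
    have h1 := mul_meas_ge_le_integral_of_nonneg (μ := gm r (r + p))
      (Filter.Eventually.of_forall fun G => mul_nonneg hε.le (trRR_nonneg hε G))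
      ((integrable_tr (r := r) (n := r + p) hε).const_mul ε) 1
    rw [one_mul, integral_const_mul] at h1
    refine (measureReal_mono (fun G hG => ?_)).trans
      (h1.trans (mul_le_mul_of_nonneg_left (int_tr_le hp hε) hε.le))
    exact one_le_of_singular hε G hG
  have h0 : (gm r (r + p)).real S ≤ 0 := by
    refine le_of_forall_pos_le_add fun δ hδ => ?_
    have := hb (δ / (r + 1)) (by positivity)
    refine this.trans ?_
    rw [zero_add, div_mul_eq_mul_div, div_le_iff₀ (by positivity)]
    nlinarith
  have := le_antisymm h0 measureReal_nonneg
  rwa [measureReal_eq_zero_iff] at this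

lemma main_int {r p : ℕ} (hp : 2 ≤ p) :
    ∫ G : Matrix (Fin r) (Fin (r + p)) ℝ, ((G * Gᵀ)⁻¹).trace ∂(gm r (r + p)) =
      (r : ℝ) / ((p : ℝ) - 1) := by
  set e : ℕ → ℝ := fun k => 1 / ((k : ℝ) + 1)
  have he : ∀ k, 0 < e k := fun k => Nat.one_div_pos_of_nat
  have het : Filter.Tendsto e Filter.atTop (nhds 0) := tendsto_one_div_add_atTop_nhds_zero_nat
  have hae := ae_isUnit (r := r) hp
  have hlim : ∀ G : Matrix (Fin r) (Fin (r + p)) ℝ, IsUnit (G * Gᵀ).det →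
      Filter.Tendsto (fun k => RR (e k) G) Filter.atTop (nhds (G * Gᵀ)⁻¹) :=
    fun G hG => (tendsto_RR G hG).comp het
  have hctr : Continuous fun M : Matrix (Fin r) (Fin r) ℝ => M.trace := continuous_id.matrix_trace
  have hlimt : ∀ᵐ G : Matrix (Fin r) (Fin (r + p)) ℝ ∂(gm r (r + p)),
      Filter.Tendsto (fun k => (RR (e k) G).trace) Filter.atTop
        (nhds (G * Gᵀ)⁻¹.trace) := by
    filter_upwards [hae] with G hG
    exact (hctr.tendsto _).comp (hlim G hG)
  have hmeas : AEStronglyMeasurable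
      (fun G : Matrix (Fin r) (Fin (r + p)) ℝ => ((G * Gᵀ)⁻¹).trace) (gm r (r + p)) :=
    aestronglyMeasurable_of_tendsto_ae Filter.atTop
      (fun k => (measurable_tr (he k)).aestronglyMeasurable) hlimt
  have hnn : ∀ G : Matrix (Fin r) (Fin (r + p)) ℝ, 0 ≤ ((G * Gᵀ)⁻¹).trace :=
    fun G => (posSemidef_GGt G).inv.trace_nonneg
  have hint : Integrable
      (fun G : Matrix (Fin r) (Fin (r + p)) ℝ => ((G * Gᵀ)⁻¹).trace) (gm r (r + p)) := by
    refine ⟨hmeas, ?_⟩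
    rw [hasFiniteIntegral_iff_ofReal (Filter.Eventually.of_forall hnn)]
    have hle : ∫⁻ G : Matrix (Fin r) (Fin (r + p)) ℝ, ENNReal.ofReal ((G * Gᵀ)⁻¹).trace
        ∂(gm r (r + p)) ≤ ENNReal.ofReal r := by
      calc _ = ∫⁻ G : Matrix (Fin r) (Fin (r + p)) ℝ, Filter.liminf
            (fun k => ENNReal.ofReal (RR (e k) G).trace) Filter.atTop ∂(gm r (r + p)) := by
            refine lintegral_congr_ae ?_
            filter_upwards [hlimt] with G hG
            exact (ENNReal.tendsto_ofReal hG).liminf_eq.symm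
        _ ≤ Filter.liminf (fun k => ∫⁻ G : Matrix (Fin r) (Fin (r + p)) ℝ,
            ENNReal.ofReal (RR (e k) G).trace ∂(gm r (r + p))) Filter.atTop :=
            lintegral_liminf_le fun k => (measurable_tr (he k)).ennreal_ofReal
        _ ≤ Filter.liminf (fun _ : ℕ => ENNReal.ofReal r) Filter.atTop := by
            refine Filter.liminf_le_liminf (Filter.Eventually.of_forall fun k => ?_)
            rw [← ofReal_integral_eq_lintegral_ofReal (integrable_tr (he k))
              (Filter.Eventually.of_forall fun G => trRR_nonneg (he k) G)]
            exact ENNReal.ofReal_le_ofReal (int_tr_le hp (he k))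
        _ = _ := by simp
    exact hle.trans_lt ENNReal.ofReal_lt_top
  have hT : Filter.Tendsto (fun k => ∫ G : Matrix (Fin r) (Fin (r + p)) ℝ,
      (RR (e k) G).trace ∂(gm r (r + p))) Filter.atTop
      (nhds (∫ G : Matrix (Fin r) (Fin (r + p)) ℝ, ((G * Gᵀ)⁻¹).trace
        ∂(gm r (r + p)))) := by
    refine tendsto_integral_of_dominated_convergence _
      (fun k => (measurable_tr (he k)).aestronglyMeasurable) hint (fun k => ?_) hlimt
    filter_upwards [hae] with G hG
    rw [Real.norm_eq_abs, abs_of_nonneg (trRR_nonneg (he k) G)]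
    exact trRR_le_inv (he k) G hG
  have hJ : Filter.Tendsto (fun k => ∫ G : Matrix (Fin r) (Fin (r + p)) ℝ,
      e k * ((RR (e k) G * RR (e k) G).trace + (RR (e k) G).trace ^ 2) ∂(gm r (r + p)))
      Filter.atTop (nhds (∫ _ : Matrix (Fin r) (Fin (r + p)) ℝ, (0 : ℝ) ∂(gm r (r + p)))) := by
    refine tendsto_integral_of_dominated_convergence _
      (fun k => (measurable_rest (he k)).aestronglyMeasurable)
      (hint.const_mul (1 + r : ℝ)) (fun k => ?_) ?_
    · filter_upwards [hae] with G hG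
      rw [Real.norm_eq_abs, abs_of_nonneg (rest_bound (he k) G).1]
      exact (rest_bound (he k) G).2.trans
        (mul_le_mul_of_nonneg_left (trRR_le_inv (he k) G hG) (by positivity))
    · filter_upwards [hae] with G hG
      have h1 := hlim G hG
      have hc2 : Continuous fun M : Matrix (Fin r) (Fin r) ℝ => (M * M).trace + M.trace ^ 2 :=
        (continuous_id.matrix_mul continuous_id).matrix_trace.add (hctr.pow 2)
      have h2 := het.mul ((hc2.tendsto _).comp h1)
      rw [zero_mul] at h2
      exact h2
  have hk : ∀ k, _ := fun k => key_eps (r := r) (n := r + p) (he k)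
  have hL := (tendsto_const_nhds (x := (r : ℝ)) (f := Filter.atTop (α := ℕ))).sub (het.mul hT)
  have hR := (hT.const_mul (((r + p : ℕ) : ℝ) - r - 1)).add hJ
  have heq := tendsto_nhds_unique (hL.congr hk) hR
  have hp' : (2 : ℝ) ≤ p := by exact_mod_cast hp
  rw [eq_div_iff (by linarith)]
  push_cast at heq
  simp only [integral_zero] at heq
  linarith

lemma frob_pinv {r n : ℕ} (G : Matrix (Fin r) (Fin n) ℝ) :
    frobNorm (pinvRow G) ^ 2 = ((G * Gᵀ)⁻¹).trace := by
  rw [frobNorm, Real.sq_sqrt (by positivity)]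
  have h : ((pinvRow G)ᵀ * pinvRow G).trace = ∑ i, ∑ j, (pinvRow G i j) ^ 2 := by
    rw [Finset.sum_comm]
    simp only [Matrix.trace, Matrix.mul_apply, Matrix.diag_apply, Matrix.transpose_apply, sq]
  rw [← h, pinvRow]
  by_cases hs : IsUnit (G * Gᵀ).det
  · rw [Matrix.transpose_mul, Matrix.transpose_transpose, Matrix.mul_assoc, ← Matrix.mul_assoc G,
      Matrix.mul_nonsing_inv _ hs, Matrix.mul_one, Matrix.trace_transpose]
  · rw [Matrix.nonsing_inv_apply_not_isUnit _ hs]; simp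

/-- `E‖G†‖_F² = r/(p−1)` for an `r×(r+p)` standard Gaussian
matrix `G` with `p ≥ 2`. -/
theorem expected_sq_frobNorm_pinv_gaussian {r p : ℕ} (hp : 2 ≤ p) :
    ∫ G, frobNorm (pinvRow G) ^ 2
        ∂(stdGaussianMatrix (Fin r) (Fin (r + p))) = (r : ℝ) / ((p : ℝ) - 1) := by
  simp_rw [frob_pinv]
  exact main_int hp
end

section
/- Let G be an r×(r+p) standard Gaussian random matrix with p ≥ 2, and let G† = Gᵀ(GGᵀ)⁻¹ denote its Moore–Penrose pseudoinverse (GGᵀ is invertible almost surely; on the null event where it is singular, (GGᵀ)⁻¹ is interpreted as 0). Then E‖G†‖ ≤ e√(r+p)/p, where ‖·‖ is the spectral norm. -/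
open Matrix MeasureTheory ProbabilityTheory

open scoped ENNReal

/-- Radial Gaussian integral. -/
noncomputable def JJ (m : ℕ) : ℝ := ∫ y in Set.Ioi (0:ℝ), y ^ m * Real.exp (-y^2/2)

lemma JJ_eq (m : ℕ) : JJ m = (1/2:ℝ) ^ (-((m:ℝ)+1)/2) * (1/2) * Real.Gamma (((m:ℝ)+1)/2) := by
  have h := integral_rpow_mul_exp_neg_mul_rpow (p := 2) (q := m) (b := 1/2) (by norm_num)
    (by have : (0:ℝ) ≤ m := by positivity
        linarith) (by norm_num)
  rw [← h, JJ]
  refine setIntegral_congr_fun measurableSet_Ioi (fun y _ => ?_)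
  simp only [Real.rpow_natCast, Real.rpow_two]
  congr 2; ring

lemma JJ_pos (m : ℕ) : 0 < JJ m := by
  rw [JJ_eq]
  have : 0 < Real.Gamma (((m:ℝ)+1)/2) := Real.Gamma_pos_of_pos (by positivity)
  positivity

lemma JJ_rec (m : ℕ) : JJ (m+2) = (m+1) * JJ m := by
  rw [JJ_eq, JJ_eq]
  push_cast
  rw [show ((m:ℝ)+2+1)/2 = ((m:ℝ)+1)/2 + 1 by ring, Real.Gamma_add_one (by positivity),
    show -((m:ℝ)+2+1)/2 = -((m:ℝ)+1)/2 + (-1) by ring, Real.rpow_add (by norm_num), Real.rpow_neg_one]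
  ring

lemma JJ_integrable (m : ℕ) :
    IntegrableOn (fun y : ℝ => y ^ m * Real.exp (-y^2/2)) (Set.Ioi 0) :=
  (integrable_of_integral_eq_one (f := fun y : ℝ => (JJ m)⁻¹ * (y ^ m * Real.exp (-y^2/2))) (by
    rw [integral_const_mul]; exact inv_mul_cancel₀ (JJ_pos m).ne')).const_mul (JJ m) |>.congr
    (.of_forall fun y => by
      have := (JJ_pos m).ne'
      simp only
      field_simp)

lemma pi_gaussian_density {ι : Type*} [Fintype ι] :
    (Measure.pi fun _ : ι => gaussianReal 0 1) =
    (volume : Measure (ι → ℝ)).withDensity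
      (fun x => ENNReal.ofReal (∏ i, gaussianPDFReal 0 1 (x i))) := by
  refine Measure.pi_eq fun s hs => ?_
  rw [withDensity_apply _ (MeasurableSet.univ_pi hs)]
  have h1 : ∀ i, gaussianReal 0 1 (s i) =
      ENNReal.ofReal (∫ x in s i, gaussianPDFReal 0 1 x) := fun i => by
    rw [gaussianReal_apply_eq_integral _ one_ne_zero]
  simp_rw [h1]
  rw [← ENNReal.ofReal_prod_of_nonneg (fun i _ => setIntegral_nonneg (hs i)
    (fun x _ => gaussianPDFReal_nonneg _ _ _)), volume_pi, Measure.restrict_pi_pi,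
    ← integral_fintype_prod_eq_prod (μ := fun i => volume.restrict (s i))
      (f := fun i x => gaussianPDFReal 0 1 x),
    ofReal_integral_eq_lintegral_ofReal]
  · exact Integrable.fintype_prod (fun i => (integrable_gaussianPDFReal 0 1).restrict)
  · exact .of_forall fun x => Finset.prod_nonneg fun i _ => gaussianPDFReal_nonneg _ _ _

lemma lint_radial_aux {d : ℕ} :
    ∃ C : ℝ, 0 ≤ C ∧ ∀ f : ℝ → ℝ, Measurable f →
    ∫⁻ x, ENNReal.ofReal (f ‖x‖) ∂(stdGaussian (EuclideanSpace ℝ (Fin d))) =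
     ∫⁻ x : EuclideanSpace ℝ (Fin d), ENNReal.ofReal (C * Real.exp (-‖x‖^2/2) * f ‖x‖) := by
  refine ⟨(√(2 * Real.pi))⁻¹ ^ d, by positivity, fun f hf => ?_⟩
  rw [← map_pi_eq_stdGaussian, lintegral_map (by fun_prop) (by fun_prop), pi_gaussian_density,
    lintegral_withDensity_eq_lintegral_mul _ (by fun_prop) (by fun_prop),
    ← (PiLp.volume_preserving_toLp (Fin d)).lintegral_comp (by fun_prop)]
  refine lintegral_congr fun x => ?_
  have hE : ∏ i, gaussianPDFReal 0 1 (x i) =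
      (√(2 * Real.pi))⁻¹ ^ d * Real.exp (-‖WithLp.toLp 2 x‖^2/2) := by
    simp only [gaussianPDFReal, EuclideanSpace.real_norm_sq_eq]
    rw [Finset.prod_mul_distrib, ← Real.exp_sum]
    simp [Finset.sum_div, neg_div]
  simp only [Pi.mul_apply]
  rw [hE, ← ENNReal.ofReal_mul (by positivity)]

lemma lint_radial_E {d : ℕ} : ∃ C : ℝ, 0 ≤ C ∧ ∀ f : ℝ → ℝ, Measurable f → (∀ y, 0 ≤ y → 0 ≤ f y) →
    ∀ m : ℕ, (∀ y, 0 < y → y ^ d * f y = y ^ m) →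
    ∫⁻ x, ENNReal.ofReal (f ‖x‖) ∂(stdGaussian (EuclideanSpace ℝ (Fin (d+1)))) =
     ENNReal.ofReal (C * JJ m) := by
  obtain ⟨C, hC, h⟩ := lint_radial_aux (d := d+1)
  refine ⟨C * ((d+1:ℕ) * volume.real (Metric.ball (0:EuclideanSpace ℝ (Fin (d+1))) 1)),
    by positivity, fun f hf hf0 m hm => ?_⟩
  have hE : ∀ y ∈ Set.Ioi (0:ℝ), C * (y ^ m * Real.exp (-y^2/2)) =
      y ^ d * (C * Real.exp (-y^2/2) * f y) := fun y hy => by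
    rw [← hm y hy]; ring
  rw [h f hf, ← ofReal_integral_eq_lintegral_ofReal]
  · rw [integral_fun_norm_addHaar volume (fun y => C * Real.exp (-y^2/2) * f y)]
    simp only [finrank_euclideanSpace, Fintype.card_fin, Nat.add_sub_cancel, smul_eq_mul, nsmul_eq_mul]
    rw [← setIntegral_congr_fun measurableSet_Ioi hE, integral_const_mul, ← JJ]
    congr 1; ring
  · rw [integrable_fun_norm_addHaar volume (f := fun y => C * Real.exp (-y^2/2) * f y)]
    simp only [finrank_euclideanSpace, Fintype.card_fin, Nat.add_sub_cancel, smul_eq_mul]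
    exact IntegrableOn.congr_fun ((JJ_integrable m).const_mul C) hE measurableSet_Ioi
  · exact .of_forall fun x => by
      have := hf0 ‖x‖ (norm_nonneg _)
      simp only [Pi.zero_apply]; positivity

lemma lint_radial {E : Type*} [NormedAddCommGroup E] [InnerProductSpace ℝ E]
    [FiniteDimensional ℝ E] [MeasurableSpace E] [BorelSpace E] {d : ℕ}
    (hd : Module.finrank ℝ E = d + 1)
    (f : ℝ → ℝ) (hf : Measurable f) (hf0 : ∀ y, 0 ≤ y → 0 ≤ f y)
    (m : ℕ) (hm : ∀ y, 0 < y → y ^ d * f y = y ^ m) :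
    ∫⁻ x, ENNReal.ofReal (f ‖x‖) ∂(stdGaussian E) = ENNReal.ofReal (JJ m / JJ d) := by
  obtain ⟨C, hC, h⟩ := lint_radial_E (d := d)
  have h1 := h (fun _ => 1) measurable_const (fun _ _ => zero_le_one) d (fun y _ => by simp)
  simp only [ENNReal.ofReal_one, lintegral_const, measure_univ, mul_one] at h1
  have hC1 : C * JJ d = 1 := by
    have := congrArg ENNReal.toReal h1
    rw [ENNReal.toReal_ofReal (mul_nonneg hC (JJ_pos d).le)] at this
    simpa using this.symm
  let e : E ≃ₗᵢ[ℝ] EuclideanSpace ℝ (Fin (d+1)) :=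
    ((stdOrthonormalBasis ℝ E).reindex (finCongr hd)).repr
  have h2 := h f hf hf0 m hm
  rw [← stdGaussian_map e, lintegral_map (by fun_prop) (by fun_prop)] at h2
  simp only [LinearIsometryEquiv.norm_map] at h2
  rw [h2]
  congr 1
  rw [eq_div_iff (JJ_pos d).ne', mul_right_comm, hC1, one_mul]

lemma stdGaussian_map_coiso {E F : Type*} [NormedAddCommGroup E] [InnerProductSpace ℝ E]
    [FiniteDimensional ℝ E] [MeasurableSpace E] [BorelSpace E]
    [NormedAddCommGroup F] [InnerProductSpace ℝ F]
    [FiniteDimensional ℝ F] [MeasurableSpace F] [BorelSpace F]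
    (T : E → F) (hT : Measurable T) (S : F → E) (h : ∀ x y, inner ℝ (T x) y = inner ℝ x (S y))
    (hS : ∀ y, ‖S y‖ = ‖y‖) : (stdGaussian E).map T = stdGaussian F := by
  have : IsProbabilityMeasure ((stdGaussian E).map T) :=
    Measure.isProbabilityMeasure_map hT.aemeasurable
  apply Measure.ext_of_charFun
  ext t
  rw [charFun_stdGaussian, ← hS, ← charFun_stdGaussian, charFun_apply, charFun_apply,
    integral_map hT.aemeasurable (by fun_prop)]
  simp [h]

lemma JJ_prod (m q : ℕ) : JJ (m + 2*q) = JJ m * ∏ j ∈ Finset.range q, ((m:ℝ) + 1 + 2*j) := by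
  induction q with
  | zero => simp
  | succ q ih =>
    rw [show m + 2*(q+1) = (m+2*q)+2 by ring, JJ_rec, ih, Finset.prod_range_succ]
    push_cast; ring

lemma odd_bound (n : ℕ) : ((n:ℝ)+1)^n ≤ Real.exp 1 ^ n * n.factorial := by
  induction n with
  | zero => simp
  | succ n ih =>
    have h : ((n:ℝ)+2)/(n+1) ≤ Real.exp (1/(n+1)) := by
      have := Real.add_one_le_exp (1/((n:ℝ)+1))
      refine le_trans (le_of_eq ?_) this
      field_simp; ring
    have h2 : (((n:ℝ)+2)/(n+1))^(n+1) ≤ Real.exp 1 := by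
      refine (pow_le_pow_left₀ (by positivity) h (n+1)).trans (le_of_eq ?_)
      rw [← Real.exp_nat_mul]; push_cast; congr 1; field_simp
    rw [div_pow, div_le_iff₀ (by positivity)] at h2
    push_cast [Nat.factorial_succ]
    calc ((n:ℝ)+1+1)^(n+1) = ((n:ℝ)+2)^(n+1) := by ring
      _ ≤ Real.exp 1 * ((n:ℝ)+1)^(n+1) := h2
      _ = (Real.exp 1 * ((n:ℝ)+1)) * ((n:ℝ)+1)^n := by ring
      _ ≤ (Real.exp 1 * ((n:ℝ)+1)) * (Real.exp 1 ^ n * n.factorial) := by gcongr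
      _ = _ := by ring

lemma fact_upper (q : ℕ) (hq : 1 ≤ q) :
    (q.factorial : ℝ) ≤ Real.exp 1 * √q * (q / Real.exp 1) ^ q := by
  obtain ⟨k, rfl⟩ : ∃ k, q = k + 1 := ⟨q - 1, by omega⟩
  have h := Stirling.stirlingSeq'_antitone (Nat.zero_le k)
  simp only [Function.comp, Nat.succ_eq_add_one, zero_add, Stirling.stirlingSeq_one] at h
  rw [Stirling.stirlingSeq, div_le_iff₀ (by positivity)] at h
  refine h.trans (le_of_eq ?_)
  rw [Real.sqrt_mul (by norm_num)]
  have : (√2:ℝ) ≠ 0 := by positivity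
  field_simp

lemma fact_two_mul (q : ℕ) : ((2*q).factorial : ℝ) =
    2^q * q.factorial * ∏ j ∈ Finset.range q, ((2:ℝ)*j+1) := by
  induction q with
  | zero => simp
  | succ q ih =>
    rw [show 2*(q+1) = 2*q+1+1 by ring, Nat.factorial_succ, Nat.factorial_succ, Nat.factorial_succ,
      Finset.prod_range_succ]
    push_cast
    rw [ih]; ring

lemma even_bound (q : ℕ) (hq : 1 ≤ q) :
    ((2:ℝ)*q)^q ≤ Real.exp 1 ^ q * ∏ j ∈ Finset.range q, ((2:ℝ)*j+1) := by
  have h1 := Stirling.le_factorial_stirling (2*q)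
  have h2 := fact_upper q hq
  rw [fact_two_mul] at h1
  set Pq := ∏ j ∈ Finset.range q, ((2:ℝ)*j+1) with hP
  have hP0 : 0 < Pq := Finset.prod_pos fun j _ => by positivity
  have he : Real.exp 1 ≤ √(4*Real.pi) := by
    apply Real.le_sqrt_of_sq_le
    nlinarith [Real.exp_one_lt_d9, Real.pi_gt_three, Real.exp_pos 1]
  have hq0 : (0:ℝ) < q := by exact_mod_cast hq
  have h3 : √(4*Real.pi) * √q * ((2*q:ℝ) / Real.exp 1)^(2*q) ≤
      2^q * (Real.exp 1 * √q * (q / Real.exp 1) ^ q) * Pq := by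
    refine le_trans (le_of_eq ?_) (h1.trans (by gcongr))
    rw [← Real.sqrt_mul (by positivity)]
    push_cast
    congr 2; ring
  have h4 : Real.exp 1 * √q * ((2*q:ℝ) / Real.exp 1)^(2*q) ≤
      2^q * (Real.exp 1 * √q * (q / Real.exp 1) ^ q) * Pq := by
    refine le_trans ?_ h3; gcongr
  have hd : (2:ℝ)^q * (q / Real.exp 1)^q = ((2*q:ℝ) / Real.exp 1)^q := by
    rw [← mul_pow]; congr 1; ring
  have h5 : (Real.exp 1 * √q * ((2*q:ℝ) / Real.exp 1)^q) * ((2*q:ℝ) / Real.exp 1)^q ≤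
      (Real.exp 1 * √q * ((2*q:ℝ) / Real.exp 1)^q) * Pq := by
    calc _ = Real.exp 1 * √q * ((2*q:ℝ) / Real.exp 1)^(2*q) := by ring
      _ ≤ _ := h4
      _ = _ := by rw [← hd]; ring
  have h6 := le_of_mul_le_mul_left h5 (by positivity)
  rwa [div_pow, div_le_iff₀ (by positivity), mul_comm Pq] at h6

lemma prod_bound (p : ℕ) (hp : 2 ≤ p) :
    (p:ℝ)^(2*(p/2)) ≤ Real.exp 1 ^ (2*(p/2)) * ((∏ j ∈ Finset.range (p/2), ((0:ℕ) + 1 + 2*(j:ℝ))) *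
      ∏ j ∈ Finset.range (p/2), (((p - 2*(p/2) : ℕ):ℝ) + 1 + 2*j)) := by
  obtain ⟨q, rfl | rfl⟩ := Nat.even_or_odd' p
  · have hq : 1 ≤ q := by omega
    rw [Nat.mul_div_cancel_left _ (by norm_num : 0 < 2), Nat.sub_self]
    have h := even_bound q hq
    have e : ∀ j : ℕ, ((0:ℕ):ℝ) + 1 + 2*(j:ℝ) = 2*j+1 := fun j => by push_cast; ring
    simp only [e]
    calc ((2*q:ℕ):ℝ)^(2*q) = (((2:ℝ)*q)^q)^2 := by push_cast; ring
      _ ≤ _ := pow_le_pow_left₀ (by positivity) h 2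
      _ = _ := by ring
  · have hd : (2*q+1)/2 = q := by omega
    rw [hd, show 2*q+1-2*q = 1 by omega]
    have h := odd_bound (2*q)
    rw [fact_two_mul] at h
    have e : (2:ℝ)^q * q.factorial = ∏ j ∈ Finset.range q, (((1:ℕ):ℝ) + 1 + 2*j) := by
      clear h hd hp
      induction q with
      | zero => simp
      | succ q ih =>
        rw [Finset.prod_range_succ, ← ih, Nat.factorial_succ]; push_cast; ring
    have e2 : ∀ j : ℕ, ((0:ℕ):ℝ) + 1 + 2*(j:ℝ) = 2*j+1 := fun j => by push_cast; ring
    simp only [e2]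
    rw [← e]
    push_cast at h ⊢
    refine h.trans (le_of_eq ?_)
    ring

lemma const_bound (s p : ℕ) (hp : 2 ≤ p) :
    (JJ (p - 2*(p/2)) / JJ p) * (JJ (s + 2*(p/2)) / JJ s) ≤
      (Real.exp 1 * √(((s+1:ℕ):ℝ)+p) / p)^(2*(p/2)) * (JJ (0+2*(p/2)) / JJ 0) := by
  have hb := prod_bound p hp
  set q := p/2 with hq
  have h1 : JJ p = JJ (p-2*q) * ∏ j ∈ Finset.range q, (((p - 2*q : ℕ):ℝ) + 1 + 2*j) := by
    rw [← JJ_prod]; congr 1; omega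
  rw [h1, JJ_prod, JJ_prod]
  have j1 := JJ_pos (p-2*q)
  have j2 := JJ_pos s
  have j3 := JJ_pos 0
  set A := ∏ j ∈ Finset.range q, (((p - 2*q : ℕ):ℝ) + 1 + 2*j)
  set B := ∏ j ∈ Finset.range q, (((0:ℕ):ℝ) + 1 + 2*(j:ℝ))
  have hA : 0 < A := Finset.prod_pos fun j _ => by positivity
  have hB : 0 < B := Finset.prod_pos fun j _ => by positivity
  have hD : ∏ j ∈ Finset.range q, ((s:ℝ) + 1 + 2*j) ≤ (((s+1:ℕ):ℝ)+p)^q := by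
    rw [show (((s+1:ℕ):ℝ)+p)^q = ∏ _j ∈ Finset.range q, (((s+1:ℕ):ℝ)+p) by simp]
    refine Finset.prod_le_prod (fun j _ => by positivity) fun j hj => ?_
    have : 2*j ≤ p := by have := Finset.mem_range.1 hj; omega
    have : (2*j:ℝ) ≤ p := by exact_mod_cast this
    push_cast; linarith
  set D := ∏ j ∈ Finset.range q, ((s:ℝ) + 1 + 2*j)
  have hp0 : (0:ℝ) < p := by positivity
  have e1 : JJ (p-2*q) / (JJ (p-2*q) * A) * (JJ s * D / JJ s) = D / A := by field_simp
  have e2 : JJ 0 * B / JJ 0 = B := by field_simp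
  rw [e1, e2, div_le_iff₀ hA, div_pow, mul_pow, pow_mul (√_), Real.sq_sqrt (by positivity)]
  calc D ≤ (((s+1:ℕ):ℝ)+p)^q := hD
    _ ≤ (((s+1:ℕ):ℝ)+p)^q * (Real.exp 1 ^ (2*q) * (B*A) / p^(2*q)) := by
      apply le_mul_of_one_le_right (by positivity)
      rwa [one_le_div (by positivity)]
    _ = _ := by ring

lemma ratio_mono {p d q : ℕ} (h : p ≤ d) (hq : 2*q ≤ p) :
    JJ (d-2*q) / JJ d ≤ JJ (p-2*q) / JJ p := by
  have h0 : ∀ d, 2*q ≤ d → JJ (d-2*q) / JJ d =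
      (∏ j ∈ Finset.range q, (((d - 2*q : ℕ):ℝ) + 1 + 2*j))⁻¹ := fun d hd => by
    have h1 : JJ d = JJ (d-2*q) * ∏ j ∈ Finset.range q, (((d - 2*q : ℕ):ℝ) + 1 + 2*j) := by
      rw [← JJ_prod]; congr 1; omega
    rw [h1]
    have j1 := JJ_pos (d-2*q)
    field_simp
  rw [h0 d (by omega), h0 p hq]
  apply inv_anti₀ (Finset.prod_pos fun j _ => by positivity)
  refine Finset.prod_le_prod (fun j _ => by positivity) fun j hj => ?_
  have : ((p-2*q:ℕ):ℝ) ≤ ((d-2*q:ℕ):ℝ) := by exact_mod_cast (by omega : p-2*q ≤ d-2*q)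
  linarith

lemma opNorm_moment {E F : Type*} [NormedAddCommGroup E] [InnerProductSpace ℝ E]
    [FiniteDimensional ℝ E] [MeasurableSpace E] [BorelSpace E]
    [NormedAddCommGroup F] [InnerProductSpace ℝ F] [FiniteDimensional ℝ F]
    (T : E →L[ℝ] F) (q : ℕ) (hq : 1 ≤ q) :
    ENNReal.ofReal (‖T‖^(2*q)) * ENNReal.ofReal (JJ (0+2*q) / JJ 0) ≤
      ∫⁻ x, ENNReal.ofReal (‖T x‖^(2*q)) ∂(stdGaussian E) := by
  have : CompleteSpace E := FiniteDimensional.complete ℝ E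
  have : CompleteSpace F := FiniteDimensional.complete ℝ F
  have : ProperSpace F := FiniteDimensional.proper ℝ F
  obtain ⟨w, hw, hw2⟩ : ∃ w : F, ‖w‖ ≤ 1 ∧ ‖(ContinuousLinearMap.adjoint T) w‖ = ‖T‖ := by
    obtain ⟨w, hw, h⟩ := (isCompact_closedBall (0:F) 1).exists_sSup_image_eq
      (f := fun w => ‖(ContinuousLinearMap.adjoint T) w‖) ⟨0, by simp⟩ (by fun_prop)
    refine ⟨w, by simpa using hw, ?_⟩
    rw [← h, ContinuousLinearMap.sSup_unitClosedBall_eq_norm, LinearIsometryEquiv.norm_map]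
  set u := (ContinuousLinearMap.adjoint T) w with hu
  by_cases h0 : ‖T‖ = 0
  · rw [h0, zero_pow (by omega)]; simp
  set e := ‖T‖⁻¹ • u with he
  have hen : ‖e‖ = 1 := by rw [he, norm_smul, hw2]; simp [h0]
  have hmap : (stdGaussian E).map (fun x => inner ℝ e x) = stdGaussian ℝ := by
    refine stdGaussian_map_coiso _ (by fun_prop) (fun y => y • e) (fun x y => ?_) (fun y => ?_)
    · rw [real_inner_smul_right, real_inner_comm e x]; simp
    · rw [norm_smul, hen, mul_one]
  have hrad := lint_radial (E := ℝ) (d := 0) (by simp) (fun y => y^(2*q)) (by fun_prop)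
    (fun y hy => by positivity) (0+2*q) (fun y hy => by simp)
  rw [← hrad, ← hmap, lintegral_map (by fun_prop) (by fun_prop),
    ← lintegral_const_mul' _ _ ENNReal.ofReal_ne_top]
  refine lintegral_mono fun x => ?_
  simp only
  rw [← ENNReal.ofReal_mul (by positivity), ← mul_pow]
  apply ENNReal.ofReal_le_ofReal
  refine pow_le_pow_left₀ (by positivity) ?_ _
  rw [he, real_inner_smul_left, norm_mul, norm_inv, norm_norm, ← mul_assoc, mul_inv_cancel₀ h0,
    one_mul, hu, ContinuousLinearMap.adjoint_inner_left]
  refine (norm_inner_le_norm w (T x)).trans ?_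
  exact mul_le_of_le_one_left (norm_nonneg _) hw

/-- Euclidean vectors to matrices. -/
def toMat {r n : ℕ} (x : EuclideanSpace ℝ (Fin r × Fin n)) : Matrix (Fin r) (Fin n) ℝ :=
  Matrix.of fun i j => x (i, j)

lemma measurable_toMat {r n : ℕ} : Measurable (toMat (r := r) (n := n)) := by
  refine measurable_pi_lambda _ fun i => measurable_pi_lambda _ fun j => ?_
  simp only [toMat, Matrix.of_apply]
  fun_prop

lemma stdGaussianMatrix_eq (r n : ℕ) : (stdGaussian (EuclideanSpace ℝ (Fin r × Fin n))).map
    toMat = stdGaussianMatrix (Fin r) (Fin n) := by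
  rw [← map_pi_eq_stdGaussian, Measure.map_map measurable_toMat (by fun_prop)]
  have h := Measure.infinitePi_map_curry (fun (_ : Fin r) (_ : Fin n) => gaussianReal 0 1)
  simp only [Measure.infinitePi_eq_pi] at h
  exact h

lemma stdGaussianMatrix_map_mul {r n : ℕ} (Q : Matrix (Fin r) (Fin r) ℝ) (hQ : Q * Qᵀ = 1) :
    (stdGaussianMatrix (Fin r) (Fin n)).map (fun G => Q * G) = stdGaussianMatrix (Fin r) (Fin n) := by
  let L : Matrix (Fin r) (Fin r) ℝ → EuclideanSpace ℝ (Fin r × Fin n) →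
      EuclideanSpace ℝ (Fin r × Fin n) :=
    fun Q x => WithLp.toLp 2 fun ij => ∑ k, Q ij.1 k * x (k, ij.2)
  have hadj : ∀ Q x y, inner ℝ (L Q x) y = inner ℝ x (L Qᵀ y) := by
    intro Q x y
    simp only [PiLp.inner_apply, Fintype.sum_prod_type, L, Matrix.transpose_apply]
    simp only [RCLike.inner_apply, conj_trivial, Finset.sum_mul, Finset.mul_sum]
    rw [Finset.sum_comm]
    rw [Finset.sum_comm (s := Finset.univ (α := Fin r))]
    refine Finset.sum_congr rfl fun j _ => ?_
    rw [Finset.sum_comm]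
    refine Finset.sum_congr rfl fun i _ => Finset.sum_congr rfl fun k _ => ?_
    ring
  have hinv : ∀ y, L Q (L Qᵀ y) = y := by
    intro y
    ext ⟨i, j⟩
    have : ∀ k, ∑ l, Q i l * Qᵀ l k = (1 : Matrix (Fin r) (Fin r) ℝ) i k := fun k => by
      rw [← hQ, Matrix.mul_apply]
    simp only [L, Finset.mul_sum]
    rw [Finset.sum_comm]
    simp only [← mul_assoc, ← Finset.sum_mul, this, Matrix.one_apply]
    simp
  have hL : Measurable (L Q) := by fun_prop
  have hmap : (stdGaussian _).map (L Q) = stdGaussian _ := by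
    refine stdGaussian_map_coiso _ hL (L Qᵀ) (hadj Q) fun y => ?_
    have : ‖L Qᵀ y‖^2 = ‖y‖^2 := by
      rw [← real_inner_self_eq_norm_sq, ← hadj, hinv, real_inner_self_eq_norm_sq]
    exact (sq_eq_sq₀ (norm_nonneg _) (norm_nonneg _)).1 this
  have hφ := measurable_toMat (r := r) (n := n)
  have hQm : Measurable (fun G : Matrix (Fin r) (Fin n) ℝ => Q * G) := by
    refine measurable_pi_lambda _ fun i => measurable_pi_lambda _ fun j => ?_
    simp only [Matrix.mul_apply]
    refine Finset.measurable_sum _ fun k _ => Measurable.const_mul ?_ _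
    exact (measurable_pi_apply j).comp (measurable_pi_apply k)
  rw [← stdGaussianMatrix_eq, Measure.map_map hQm hφ]
  conv_rhs => rw [← hmap, Measure.map_map hφ hL]
  rfl

lemma pinvRow_mul {r n : ℕ} (Q : Matrix (Fin r) (Fin r) ℝ) (hQ : Q * Qᵀ = 1)
    (G : Matrix (Fin r) (Fin n) ℝ) : pinvRow (Q * G) = pinvRow G * Qᵀ := by
  have hQ' : Qᵀ * Q = 1 := mul_eq_one_comm.1 hQ
  have i1 : Q⁻¹ = Qᵀ := Matrix.inv_eq_right_inv hQ
  have i2 : Qᵀ⁻¹ = Q := Matrix.inv_eq_right_inv hQ'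
  rw [pinvRow, pinvRow, Matrix.transpose_mul, show Q * G * (Gᵀ * Qᵀ) = Q * (G * Gᵀ) * Qᵀ by
    simp only [Matrix.mul_assoc], Matrix.mul_inv_rev, Matrix.mul_inv_rev, i1, i2]
  rw [← Matrix.mul_assoc, Matrix.mul_assoc Gᵀ, hQ', Matrix.mul_one, Matrix.mul_assoc]

lemma exists_rot {r : ℕ} (v w : EuclideanSpace ℝ (Fin r)) (h : ‖v‖ = ‖w‖) :
    ∃ Q : Matrix (Fin r) (Fin r) ℝ, Q * Qᵀ = 1 ∧ Matrix.toEuclideanLin Qᵀ v = w := by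
  let R := (Submodule.span ℝ {v - w})ᗮ.reflection
  have hR : R v = w := Submodule.reflection_sub h
  let b := EuclideanSpace.basisFun (Fin r) ℝ
  let Q0 : Matrix (Fin r) (Fin r) ℝ := Matrix.toEuclideanLin.symm R.toLinearEquiv.toLinearMap
  have h0 : Matrix.toEuclideanLin Q0 = R.toLinearEquiv.toLinearMap := by simp [Q0]
  refine ⟨Q0ᵀ, ?_, ?_⟩
  · rw [Matrix.transpose_transpose]
    ext i j
    have hc : ∀ k l, Q0 k l = R (EuclideanSpace.single l 1) k := fun k l => by
      have := congrArg (fun T => T (EuclideanSpace.single l (1:ℝ)) k) h0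
      simp [Matrix.toLpLin_apply] at this
      exact this
    have := R.inner_map_map (EuclideanSpace.single i 1) (EuclideanSpace.single j 1)
    rw [Matrix.mul_apply]
    simp only [Matrix.transpose_apply, hc]
    simp only [PiLp.inner_apply (R _), RCLike.inner_apply, conj_trivial] at this
    simp only [mul_comm (R (EuclideanSpace.single i 1) _), this]
    simp [Matrix.one_apply, EuclideanSpace.inner_single_left]
  · rw [Matrix.transpose_transpose, h0]; exact hR

/-- The pseudoinverse acting on Euclidean vectors. -/
noncomputable def tau {r n : ℕ} (G : Matrix (Fin r) (Fin n) ℝ) (x : EuclideanSpace ℝ (Fin r)) :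
    EuclideanSpace ℝ (Fin n) := Matrix.toEuclideanLin (pinvRow G) x

lemma tau_apply {r n : ℕ} (G : Matrix (Fin r) (Fin n) ℝ) (x : EuclideanSpace ℝ (Fin r)) (j : Fin n) :
    tau G x j = ∑ k, pinvRow G j k * x k := by
  simp [tau, Matrix.toLpLin_apply, Matrix.mulVec, dotProduct]

lemma measurable_pinvRow_entry {r n : ℕ} (j : Fin n) (k : Fin r) :
    Measurable (fun G : Matrix (Fin r) (Fin n) ℝ => pinvRow G j k) := by
  have hent : ∀ (i : Fin r) (j : Fin n), Measurable (fun G : Matrix (Fin r) (Fin n) ℝ => G i j) :=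
    fun i j => (measurable_pi_apply j).comp (measurable_pi_apply i)
  have hgram : ∀ (i l : Fin r), Measurable (fun G : Matrix (Fin r) (Fin n) ℝ => (G * Gᵀ) i l) := by
    intro i l
    simp only [Matrix.mul_apply, Matrix.transpose_apply]
    exact Finset.measurable_sum _ fun k _ => (hent _ _).mul (hent _ _)
  have hdet : ∀ F : Matrix (Fin r) (Fin n) ℝ → Matrix (Fin r) (Fin r) ℝ,
      (∀ i l, Measurable fun G => F G i l) → Measurable fun G => (F G).det := by
    intro F hF
    simp only [Matrix.det_apply']
    exact Finset.measurable_sum _ fun σ _ => (Finset.measurable_prod _ fun i _ => hF _ _).const_mul _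
  have hinv : ∀ (i l : Fin r), Measurable (fun G : Matrix (Fin r) (Fin n) ℝ => (G * Gᵀ)⁻¹ i l) := by
    intro i l
    simp only [Matrix.inv_def, Matrix.smul_apply, Ring.inverse_eq_inv', smul_eq_mul,
      Matrix.adjugate_apply]
    refine (hdet _ hgram).inv.mul (hdet _ fun a b => ?_)
    by_cases h : a = l
    · subst h; simp
    · simp only [Matrix.updateRow_ne h]; exact hgram a b
  simp only [pinvRow, Matrix.mul_apply (M := _ᵀ), Matrix.transpose_apply]
  exact Finset.measurable_sum _ fun i _ => (hent _ _).mul (hinv _ _)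

lemma measurable_tau {r n : ℕ} :
    Measurable (fun z : Matrix (Fin r) (Fin n) ℝ × EuclideanSpace ℝ (Fin r) => ‖tau z.1 z.2‖) := by
  simp only [EuclideanSpace.norm_eq, tau_apply]
  refine Measurable.sqrt (Finset.measurable_sum _ fun j _ => ?_)
  refine Measurable.pow_const (Measurable.norm (Finset.measurable_sum _ fun k _ => ?_)) _
  refine ((measurable_pinvRow_entry j k).comp measurable_fst).mul ?_
  fun_prop

lemma dist_bound {s n : ℕ} (G : Matrix (Fin (s+1)) (Fin n) ℝ) (K : Submodule ℝ (EuclideanSpace ℝ (Fin n)))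
    (hK : K = (Submodule.span ℝ (Set.range fun i : Fin s =>
      (WithLp.toLp 2 (G i.succ) : EuclideanSpace ℝ (Fin n))))ᗮ) :
    ‖tau G (EuclideanSpace.single 0 1)‖ ≤ ‖K.orthogonalProjectionOnto (WithLp.toLp 2 (G 0))‖⁻¹ := by
  by_cases hdet : IsUnit (G * Gᵀ).det
  swap
  · have : pinvRow G = 0 := by
      rw [pinvRow, Matrix.nonsing_inv_apply_not_isUnit _ hdet, Matrix.mul_zero]
    simp [tau, this]
  let row : Fin (s+1) → EuclideanSpace ℝ (Fin n) := fun i => WithLp.toLp 2 (G i)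
  set y := tau G (EuclideanSpace.single 0 1) with hy
  let c : Fin (s+1) → ℝ := fun i => (G * Gᵀ)⁻¹ i 0
  have hyj : ∀ j, y j = ∑ i, G i j * c i := fun j => by
    rw [hy, tau_apply]
    simp [pinvRow, Matrix.mul_apply (M := Gᵀ), c]
  have hysum : y = ∑ i, c i • row i := by
    ext j
    simp [hyj, row, mul_comm]
  have hin : ∀ i, inner ℝ (row i) y = if i = 0 then 1 else 0 := by
    intro i
    have h1 : (G * Gᵀ * (G * Gᵀ)⁻¹) i 0 = (1 : Matrix (Fin (s+1)) (Fin (s+1)) ℝ) i 0 := by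
      rw [Matrix.mul_nonsing_inv _ hdet]
    rw [Matrix.one_apply] at h1
    rw [← h1, Matrix.mul_assoc, Matrix.mul_apply]
    simp only [PiLp.inner_apply, RCLike.inner_apply, conj_trivial, row]
    refine Finset.sum_congr rfl fun j _ => ?_
    rw [hyj, mul_comm, Matrix.mul_apply]
    simp [c]
  have hyK : y ∈ K := by
    rw [hK, Submodule.mem_orthogonal]
    intro u hu
    induction hu using Submodule.span_induction with
    | mem x h =>
      obtain ⟨i, rfl⟩ := h
      simpa using hin i.succ
    | zero => simp
    | add a b _ _ ha hb => rw [inner_add_left, ha, hb, add_zero]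
    | smul a b _ hb => rw [real_inner_smul_left, hb, mul_zero]
  have hP0 : ∀ i : Fin s, K.orthogonalProjectionOnto (row i.succ) = 0 := by
    intro i
    rw [Submodule.orthogonalProjectionOnto_eq_zero_iff, hK, Submodule.orthogonal_orthogonal]
    exact Submodule.subset_span ⟨i, rfl⟩
  have hPy : (K.orthogonalProjectionOnto y : EuclideanSpace ℝ (Fin n)) = y :=
    congrArg Subtype.val (Submodule.orthogonalProjectionOnto_mem_subspace_eq_self (⟨y, hyK⟩ : K))
  have hyc : y = c 0 • (K.orthogonalProjectionOnto (row 0) : EuclideanSpace ℝ (Fin n)) := by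
    rw [← hPy]
    conv_lhs => rw [hysum]
    rw [map_sum, Fin.sum_univ_succ]
    simp [hP0]
  have h1 : c 0 * ‖K.orthogonalProjectionOnto (row 0)‖^2 = 1 := by
    have h2 : inner ℝ (row 0) y = 1 := by simpa using hin 0
    have h3 := Submodule.inner_orthogonalProjectionOnto_eq_of_mem_right (⟨y, hyK⟩ : K) (row 0)
    rw [Submodule.coe_inner] at h3
    rw [← h3] at h2
    simp only at h2
    rw [hyc, real_inner_smul_right, real_inner_self_eq_norm_sq] at h2
    exact h2
  have hne : ‖K.orthogonalProjectionOnto (row 0)‖ ≠ 0 := fun h => by simp [h] at h1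
  have hc0 : 0 ≤ c 0 := by
    by_contra hneg
    nlinarith [sq_nonneg ‖K.orthogonalProjectionOnto (row 0)‖]
  have : ‖y‖ = c 0 * ‖K.orthogonalProjectionOnto (row 0)‖ := by
    rw [hyc, norm_smul, Real.norm_of_nonneg hc0]; rfl
  rw [this]
  refine le_of_eq (eq_inv_of_mul_eq_one_left ?_)
  rw [← h1]; ring

lemma finrank_K {s n p : ℕ} (hn : n = s + 1 + p) (f : Fin s → EuclideanSpace ℝ (Fin n)) :
    p + 1 ≤ Module.finrank ℝ (Submodule.span ℝ (Set.range f))ᗮ := by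
  have h1 := Submodule.finrank_add_finrank_orthogonal (Submodule.span ℝ (Set.range f))
  have h2 := finrank_range_le_card (R := ℝ) f
  rw [Set.finrank] at h2
  simp at h1 h2
  omega

lemma proj_moment {n p q : ℕ} (hq : 2*q ≤ p) (K : Submodule ℝ (EuclideanSpace ℝ (Fin n)))
    (hK : p + 1 ≤ Module.finrank ℝ K) :
    ∫⁻ x, ENNReal.ofReal ((‖K.orthogonalProjectionOnto x‖⁻¹)^(2*q))
      ∂(stdGaussian (EuclideanSpace ℝ (Fin n))) ≤ ENNReal.ofReal (JJ (p-2*q) / JJ p) := by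
  obtain ⟨d, hd⟩ : ∃ d, Module.finrank ℝ K = d + 1 := ⟨Module.finrank ℝ K - 1, by omega⟩
  have hmap : (stdGaussian (EuclideanSpace ℝ (Fin n))).map (fun x => K.orthogonalProjectionOnto x) =
      stdGaussian K := by
    refine stdGaussian_map_coiso _ (by fun_prop) (fun y => (y : EuclideanSpace ℝ (Fin n)))
      (fun x y => ?_) (fun y => rfl)
    rw [Submodule.inner_orthogonalProjectionOnto_eq_of_mem_right]
  have hrad := lint_radial (E := K) hd (fun y => (y⁻¹)^(2*q)) (by fun_prop)
    (fun y hy => by positivity) (d - 2*q) (fun y hy => by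
      rw [inv_pow, ← div_eq_mul_inv, div_eq_iff (by positivity), ← pow_add]
      congr 1; omega)
  rw [← hmap, lintegral_map (by fun_prop) (by fun_prop)] at hrad
  rw [hrad]
  exact ENNReal.ofReal_le_ofReal (ratio_mono (by omega) hq)

lemma isProb_stdGaussianMatrix (r n : ℕ) :
    IsProbabilityMeasure (stdGaussianMatrix (Fin r) (Fin n)) :=
  inferInstanceAs (IsProbabilityMeasure
    (Measure.pi fun _ : Fin r => Measure.pi fun _ : Fin n => gaussianReal 0 1))

lemma moment_e0 {s n p q : ℕ} (hn : n = s + 1 + p) (hq : 2*q ≤ p) :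
    ∫⁻ G, ENNReal.ofReal (‖tau G (EuclideanSpace.single 0 1)‖^(2*q))
      ∂(stdGaussianMatrix (Fin (s+1)) (Fin n)) ≤ ENNReal.ofReal (JJ (p-2*q) / JJ p) := by
  have hF : Measurable (fun G : Matrix (Fin (s+1)) (Fin n) ℝ =>
      ENNReal.ofReal (‖tau G (EuclideanSpace.single 0 1)‖^(2*q))) :=
    ((measurable_tau.comp (measurable_id.prodMk measurable_const)).pow_const _).ennreal_ofReal
  have hmp := (measurePreserving_piFinSuccAbove
    (fun _ : Fin (s+1) => Measure.pi fun _ : Fin n => gaussianReal 0 1) 0).symm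
  have h1 := hmp.lintegral_comp hF
  refine (le_of_eq h1.symm).trans ?_
  refine (le_of_eq (lintegral_prod_symm' _ (hF.comp hmp.measurable))).trans ?_
  calc _ ≤ ∫⁻ _ : Fin s → Fin n → ℝ, ENNReal.ofReal (JJ (p-2*q) / JJ p)
        ∂(Measure.pi fun _ => Measure.pi fun _ => gaussianReal 0 1) := by
        refine lintegral_mono fun rest => ?_
        let K := (Submodule.span ℝ (Set.range fun i : Fin s =>
          (WithLp.toLp 2 (rest i) : EuclideanSpace ℝ (Fin n))))ᗮ
        refine le_trans ?_ (proj_moment hq K (finrank_K hn _))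
        rw [← map_pi_eq_stdGaussian, lintegral_map (by fun_prop) (by fun_prop)]
        refine lintegral_mono fun x => ENNReal.ofReal_le_ofReal ?_
        refine pow_le_pow_left₀ (norm_nonneg _) ?_ _
        refine (dist_bound _ K ?_).trans (le_of_eq ?_)
        · simp [K, MeasurableEquiv.piFinSuccAbove]
        · simp [MeasurableEquiv.piFinSuccAbove]
    _ = _ := by simp

lemma moment_x {s n p q : ℕ} (hn : n = s + 1 + p) (hq : 2*q ≤ p)
    (x : EuclideanSpace ℝ (Fin (s+1))) :
    ∫⁻ G, ENNReal.ofReal (‖tau G x‖^(2*q)) ∂(stdGaussianMatrix (Fin (s+1)) (Fin n)) ≤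
      ENNReal.ofReal (JJ (p-2*q) / JJ p) * ENNReal.ofReal (‖x‖^(2*q)) := by
  obtain ⟨Q, hQ, hQx⟩ := exists_rot (‖x‖ • EuclideanSpace.single 0 (1:ℝ)) x (by
    rw [norm_smul]; simp)
  have hF : Measurable (fun G : Matrix (Fin (s+1)) (Fin n) ℝ =>
      ENNReal.ofReal (‖tau G (EuclideanSpace.single 0 1)‖^(2*q))) :=
    ((measurable_tau.comp (measurable_id.prodMk measurable_const)).pow_const _).ennreal_ofReal
  have h0 := moment_e0 (s := s) (n := n) hn hq
  have hQm : Measurable (fun G : Matrix (Fin (s+1)) (Fin n) ℝ => Q * G) := by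
    refine measurable_pi_lambda _ fun i => measurable_pi_lambda _ fun j => ?_
    simp only [Matrix.mul_apply]
    refine Finset.measurable_sum _ fun k _ => Measurable.const_mul ?_ _
    exact (measurable_pi_apply j).comp (measurable_pi_apply k)
  rw [← stdGaussianMatrix_map_mul Q hQ, lintegral_map hF hQm] at h0
  calc _ = ∫⁻ G, ENNReal.ofReal (‖tau (Q * G) (EuclideanSpace.single 0 1)‖^(2*q)) *
        ENNReal.ofReal (‖x‖^(2*q)) ∂(stdGaussianMatrix (Fin (s+1)) (Fin n)) := by
        refine lintegral_congr fun G => ?_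
        rw [← ENNReal.ofReal_mul (by positivity), ← mul_pow]
        congr 2
        have : tau G x = ‖x‖ • tau (Q * G) (EuclideanSpace.single 0 1) := by
          conv_lhs => rw [← hQx]
          simp only [tau]
          rw [pinvRow_mul Q hQ, map_smul, map_smul]
          simp [Matrix.toLpLin_apply]
        rw [this, norm_smul, norm_norm, mul_comm]
    _ = _ := lintegral_mul_const' _ _ ENNReal.ofReal_ne_top
    _ ≤ _ := by gcongr

lemma moment_main {s p : ℕ} (hp : 2 ≤ p) :
    ∫⁻ G, ENNReal.ofReal (specNorm (pinvRow G) ^ (2*(p/2)))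
      ∂(stdGaussianMatrix (Fin (s+1)) (Fin (s+1+p))) ≤
      ENNReal.ofReal ((Real.exp 1 * √(((s+1:ℕ):ℝ)+p) / p)^(2*(p/2))) := by
  have hcb := const_bound s p hp
  have hq1 : 1 ≤ p/2 := by omega
  have hq2 : 2*(p/2) ≤ p := by omega
  set q := p/2
  have : IsProbabilityMeasure (stdGaussianMatrix (Fin (s+1)) (Fin (s+1+p))) :=
    isProb_stdGaussianMatrix _ _
  set c1 := JJ (0+2*q) / JJ 0 with hc1
  have hc1p : 0 < c1 := div_pos (JJ_pos _) (JJ_pos _)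
  have key : (∫⁻ G, ENNReal.ofReal (specNorm (pinvRow G) ^ (2*q))
      ∂(stdGaussianMatrix (Fin (s+1)) (Fin (s+1+p)))) * ENNReal.ofReal c1 ≤
      ENNReal.ofReal ((Real.exp 1 * √(((s+1:ℕ):ℝ)+p) / p)^(2*q)) * ENNReal.ofReal c1 := by
    rw [← lintegral_mul_const' _ _ ENNReal.ofReal_ne_top]
    calc _ ≤ ∫⁻ G, ∫⁻ x, ENNReal.ofReal (‖tau G x‖^(2*q))
            ∂(stdGaussian (EuclideanSpace ℝ (Fin (s+1))))
            ∂(stdGaussianMatrix (Fin (s+1)) (Fin (s+1+p))) := by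
          refine lintegral_mono fun G => ?_
          exact opNorm_moment
            (LinearMap.toContinuousLinearMap (Matrix.toEuclideanLin (pinvRow G))) q hq1
      _ = ∫⁻ x, ∫⁻ G, ENNReal.ofReal (‖tau G x‖^(2*q))
            ∂(stdGaussianMatrix (Fin (s+1)) (Fin (s+1+p)))
            ∂(stdGaussian (EuclideanSpace ℝ (Fin (s+1)))) :=
          lintegral_lintegral_swap (measurable_tau.pow_const _).ennreal_ofReal.aemeasurable
      _ ≤ ∫⁻ x, ENNReal.ofReal (JJ (p-2*q) / JJ p) * ENNReal.ofReal (‖x‖^(2*q))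
            ∂(stdGaussian (EuclideanSpace ℝ (Fin (s+1)))) :=
          lintegral_mono fun x => moment_x rfl hq2 x
      _ = ENNReal.ofReal (JJ (p-2*q) / JJ p) * ENNReal.ofReal (JJ (s+2*q) / JJ s) := by
          rw [lintegral_const_mul' _ _ ENNReal.ofReal_ne_top]
          congr 1
          exact lint_radial (by simp) (fun y => y^(2*q)) (by fun_prop)
            (fun y hy => by positivity) _ (fun y hy => by ring)
      _ ≤ _ := by
          rw [← ENNReal.ofReal_mul (div_pos (JJ_pos _) (JJ_pos _)).le,
            ← ENNReal.ofReal_mul (by positivity)]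
          exact ENNReal.ofReal_le_ofReal hcb
  exact (ENNReal.mul_le_mul_iff_left (by simpa using hc1p) ENNReal.ofReal_ne_top).1 key

/-- `E‖G†‖ ≤ e√(r+p)/p` for an `r×(r+p)` standard Gaussian
matrix `G` with `p ≥ 2`. -/
theorem expected_opNorm_pinv_gaussian {r p : ℕ} (hp : 2 ≤ p) :
    ∫ G, specNorm (pinvRow G) ∂(stdGaussianMatrix (Fin r) (Fin (r + p))) ≤
      Real.exp 1 * Real.sqrt ((r : ℝ) + p) / p := by
  have hc : 0 ≤ Real.exp 1 * Real.sqrt ((r : ℝ) + p) / p := by positivity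
  rcases r with _ | s
  · have h0 : ∀ G : Matrix (Fin 0) (Fin (0+p)) ℝ, specNorm (pinvRow G) = 0 := fun G => by
      rw [specNorm]
      have : LinearMap.toContinuousLinearMap (Matrix.toEuclideanLin (pinvRow G)) = 0 := by
        ext x
        rw [Subsingleton.elim x 0]; simp
      rw [this, norm_zero]
    simp only [h0, integral_zero]
    exact hc
  by_cases hi : Integrable (fun G => specNorm (pinvRow G))
    (stdGaussianMatrix (Fin (s+1)) (Fin (s+1+p)))
  swap
  · rw [integral_undef hi]; exact hc
  have hm := moment_main (s := s) hp
  have hq0 : 2*(p/2) ≠ 0 := by omega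
  have hq1 : (1:ℝ) ≤ ((2*(p/2) : ℕ):ℝ) := by exact_mod_cast (by omega : 1 ≤ 2*(p/2))
  set k := 2*(p/2)
  have : IsProbabilityMeasure (stdGaussianMatrix (Fin (s+1)) (Fin (s+1+p))) :=
    isProb_stdGaussianMatrix _ _
  have hnn : ∀ G : Matrix (Fin (s+1)) (Fin (s+1+p)) ℝ, 0 ≤ specNorm (pinvRow G) :=
    fun G => norm_nonneg _
  have hle := eLpNorm_le_eLpNorm_of_exponent_le (p := 1) (q := (k : ENNReal))
    (by exact_mod_cast (by omega : 1 ≤ k)) hi.aestronglyMeasurable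
  have hk : eLpNorm (fun G => specNorm (pinvRow G)) (k : ENNReal)
      (stdGaussianMatrix (Fin (s+1)) (Fin (s+1+p))) ≤
      ENNReal.ofReal (Real.exp 1 * Real.sqrt (((s+1:ℕ) : ℝ) + p) / p) := by
    rw [eLpNorm_eq_lintegral_rpow_enorm_toReal (by exact_mod_cast hq0) (by simp)]
    simp only [ENNReal.toReal_natCast, ENNReal.rpow_natCast]
    rw [one_div, ENNReal.rpow_inv_le_iff (by positivity), ENNReal.rpow_natCast,
      ← ENNReal.ofReal_pow hc]
    refine le_trans (le_of_eq ?_) hm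
    refine lintegral_congr fun G => ?_
    rw [Real.enorm_of_nonneg (hnn G), ENNReal.ofReal_pow (hnn G)]
  have h1 := hle.trans hk
  rw [eLpNorm_one_eq_lintegral_enorm] at h1
  rw [integral_eq_lintegral_of_nonneg_ae (.of_forall hnn) hi.aestronglyMeasurable]
  refine ENNReal.toReal_le_of_le_ofReal hc (le_trans (le_of_eq ?_) h1)
  exact lintegral_congr fun G => (Real.enorm_of_nonneg (hnn G)).symm
end
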